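/- arXiv:2404.07752 — 2 statements merged into one kernel-verified Lean document; each statement's English description precedes it below -/
import Mathlib

section
/- There exists a constant C₂ > 0 depending only on d such that for all integers 1 ≤ i ≤ d and every integer κ ≥ 1: ∫_{{s ∈ M_{d,i}(𝒪) : ‖s₁ ∧ ⋯ ∧ s_i‖ > q^{−κ}}} ‖s₁ ∧ ⋯ ∧ s_i‖^{−(d−i+1)} dμ_{di}(s) ≤ C₂ κ, where s₁, …, s_i denote the columns of s. -/
/-!
Write `q = |F|`. The theorem follows from the estimate (`level_bound`)
`μ {s : ‖s₁ ∧ ⋯ ∧ s_i‖ = q^(-m)} ≤ C q^(-m (d - i + 1))`: on this level set the integrand equals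
`q^(m (d - i + 1))`, so each of the levels `m = 0, …, κ - 1` contributes at most `C` to the
integral. The constant may depend on `F`, and as `i` ranges over a finite set it suffices to find
one for each `i`.

The estimate is proved for the first `j` columns of a `d × i` matrix, by induction on `j`, with the
measure `μ` on `d × i` matrices fixed; neither Fubini nor uniqueness of Haar measure is needed.

Induction step (`level_step`). If `‖s₁ ∧ ⋯ ∧ s_{j+1}‖ = q^(-k)`, then
`‖s₁ ∧ ⋯ ∧ s_j‖ = q^(-m)` for some `m`, and this norm is the absolute value of the minor on some
set `f` of `j` rows. For fixed `m` and `f`, let `P` be the set of such `s`. If two elements of `P`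
differ only in column `j + 1`, by a vector `u` vanishing on the rows `f`, then expanding the minor
on the rows `f ∪ {l}` along its last column (`det_snoc_sub`) gives
`|u_l| q^(-m) ≤ q^(-k)` for every other row `l`. Hence the translates of `P` by
representatives of `(𝒪 / X^(k-m) 𝒪)^(d-j)`, placed in column `j + 1` off the rows `f`, are disjoint.
They all lie in the level set `‖s₁ ∧ ⋯ ∧ s_j‖ = q^(-m)`, which yields (`piece_measure`)
`μ P ≤ q^(-(k-m)(d-j)) μ {‖s₁ ∧ ⋯ ∧ s_j‖ = q^(-m)} ≤ C q^(-k (d-j)) q^(-m)`.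
Summing over the finitely many `f` and the geometric series in `m` closes the induction.
-/

open MeasureTheory
open scoped Classical ENNReal

noncomputable section

variable (F : Type*) [Field F] [Fintype F]

/-- The absolute value `|x| = q^{-v(x)}` on the Laurent series field `K = 𝔽_q((X))`,
where `v` is the `X`-adic valuation (the order of vanishing). -/
def absv (x : LaurentSeries F) : ℝ :=
  if x = 0 then 0 else (Fintype.card F : ℝ) ^ (-(HahnSeries.order x))

instance : MeasurableSpace (LaurentSeries F) := borel _

instance (m n : ℕ) : MeasurableSpace (Matrix (Fin m) (Fin n) (LaurentSeries F)) := borel _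

instance (d : ℕ) : MeasurableSpace (Fin d → LaurentSeries F) := borel _

/-- the set of matrices with all entries in the valuation ring `𝒪 = 𝔽_q[[X]] = {x : |x| ≤ 1}`. -/
def intMat (m n : ℕ) : Set (Matrix (Fin m) (Fin n) (LaurentSeries F)) :=
  {s | ∀ k l, absv F (s k l) ≤ 1}

/-- sup norm of a vector in `K^d` -/
def supNorm {d : ℕ} (v : Fin d → LaurentSeries F) : ℝ := ⨆ j, absv F (v j)

/-- the `i × i` minor of a `d × i` matrix with row set `I`. -/
def minor {d i : ℕ} (s : Matrix (Fin d) (Fin i) (LaurentSeries F))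
    (I : {I : Finset (Fin d) // I.card = i}) : LaurentSeries F :=
  (s.submatrix (fun a : Fin i => ((I.1.orderIsoOfFin I.2 a : {x // x ∈ I.1}) : Fin d)) id).det

/-- The norm `‖s₁ ∧ ⋯ ∧ s_i‖` of the wedge product of the columns of a `d × i` matrix:
the maximum of the absolute values of its `i × i` minors. -/
def wedgeNorm {d i : ℕ} (s : Matrix (Fin d) (Fin i) (LaurentSeries F)) : ℝ :=
  ⨆ I : {I : Finset (Fin d) // I.card = i}, absv F (minor F s I)

/-- `X ∈ K`, the uniformizer. -/
def Xu : LaurentSeries F := HahnSeries.single 1 1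

/-- the diagonal element `g_t = diag(X^{-nt} I_m, X^{mt} I_n)`. -/
def gMat (m n : ℕ) (t : ℤ) : Matrix (Fin (m + n)) (Fin (m + n)) (LaurentSeries F) :=
  Matrix.reindex finSumFinEquiv finSumFinEquiv
    (Matrix.fromBlocks ((Xu F ^ (-(n * t))) • (1 : Matrix (Fin m) (Fin m) (LaurentSeries F))) 0 0
      ((Xu F ^ ((m : ℤ) * t)) • (1 : Matrix (Fin n) (Fin n) (LaurentSeries F))))

/-- the upper block-unipotent element `u_s` with blocks `(I_m, s; 0, I_n)`. -/
def uMat {m n : ℕ} (s : Matrix (Fin m) (Fin n) (LaurentSeries F)) :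
    Matrix (Fin (m + n)) (Fin (m + n)) (LaurentSeries F) :=
  Matrix.reindex finSumFinEquiv finSumFinEquiv (Matrix.fromBlocks 1 s 0 1)

/-- the exponent `β_i = m/i` for `i ≤ m` and `n/(m+n-i)` for `i > m`. -/
def betaE (m n i : ℕ) : ℝ := if i ≤ m then (m : ℝ) / i else (n : ℝ) / ((m + n - i : ℕ) : ℝ)

end

/-! ### The absolute value on Laurent series -/

section Absv

variable (F : Type*) [Field F] [Fintype F]

lemma one_lt_q : (1 : ℝ) < Fintype.card F := by
  exact_mod_cast Fintype.one_lt_card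

lemma absv_le_iff (n : ℤ) (x : LaurentSeries F) :
    absv F x ≤ (Fintype.card F : ℝ) ^ (-n) ↔ ∀ a < n, x.coeff a = 0 := by
  have hq := one_lt_q F
  by_cases hx : x = 0
  · simp only [hx, absv, if_true, HahnSeries.coeff_zero, implies_true, iff_true]
    positivity
  · rw [absv, if_neg hx, zpow_le_zpow_iff_right₀ hq, neg_le_neg_iff,
      HahnSeries.le_order_iff_forall hx]

lemma absv_le_one_iff (x : LaurentSeries F) :
    absv F x ≤ 1 ↔ ∀ a < 0, x.coeff a = 0 := by
  simpa using absv_le_iff F 0 x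

lemma absv_zero : absv F 0 = 0 := by simp [absv]

lemma absv_nonneg (x : LaurentSeries F) : 0 ≤ absv F x := by
  unfold absv
  split_ifs <;> positivity

lemma absv_ne_zero {x : LaurentSeries F} (hx : absv F x ≠ 0) : x ≠ 0 := by
  rintro rfl
  exact hx (absv_zero F)

lemma absv_of_ne_zero {x : LaurentSeries F} (hx : x ≠ 0) :
    absv F x = (Fintype.card F : ℝ) ^ (-x.order) := if_neg hx

lemma absv_eq_zero {x : LaurentSeries F} : absv F x = 0 ↔ x = 0 := by
  refine ⟨fun h => ?_, fun h => h ▸ absv_zero F⟩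
  by_contra hx
  have := one_lt_q F
  rw [absv_of_ne_zero F hx] at h
  exact (zpow_pos (by linarith) _).ne' h

lemma absv_mul (x y : LaurentSeries F) : absv F (x * y) = absv F x * absv F y := by
  by_cases hx : x = 0
  · simp [hx, absv_zero]
  by_cases hy : y = 0
  · simp [hy, absv_zero]
  have := one_lt_q F
  rw [absv_of_ne_zero F hx, absv_of_ne_zero F hy, absv_of_ne_zero F (mul_ne_zero hx hy),
    HahnSeries.order_mul hx hy, neg_add, zpow_add₀ (by linarith)]

lemma absv_neg (x : LaurentSeries F) : absv F (-x) = absv F x := by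
  simp [absv, HahnSeries.order_neg]

lemma absv_sub_le {x y : LaurentSeries F} (n : ℤ)
    (hx : absv F x ≤ (Fintype.card F : ℝ) ^ (-n)) (hy : absv F y ≤ (Fintype.card F : ℝ) ^ (-n)) :
    absv F (x - y) ≤ (Fintype.card F : ℝ) ^ (-n) := by
  rw [absv_le_iff] at *
  intro a ha
  rw [HahnSeries.coeff_sub, hx a ha, hy a ha, sub_zero]

lemma absv_one : absv F 1 = 1 := by
  simp [absv]

/-- The valuation ring `𝒪`, as a subring of `K`. -/
def intRing : Subring (LaurentSeries F) where
  carrier := {x | absv F x ≤ 1}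
  mul_mem' {a b} ha hb := by
    simp only [Set.mem_ofPred_eq, absv_mul] at *
    exact mul_le_one₀ ha (absv_nonneg F b) hb
  one_mem' := (absv_one F).le
  add_mem' {a b} ha hb := by
    simp only [Set.mem_ofPred_eq, absv_le_one_iff] at *
    intro n hn
    rw [HahnSeries.coeff_add, ha n hn, hb n hn, add_zero]
  zero_mem' := by simp [absv_zero]
  neg_mem' {a} ha := by simpa [absv_neg] using ha

lemma mem_intRing {x : LaurentSeries F} : x ∈ intRing F ↔ absv F x ≤ 1 := Iff.rfl

lemma det_mem_intRing {n : ℕ} (A : Matrix (Fin n) (Fin n) (LaurentSeries F))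
    (hA : ∀ a b, A a b ∈ intRing F) : A.det ∈ intRing F := by
  rw [Matrix.det_apply]
  refine sum_mem fun σ _ => ?_
  rw [Units.smul_def]
  exact zsmul_mem (prod_mem fun a _ => hA _ _) _

/-- A nonzero element of `𝒪` has absolute value `q ^ (-m)` with `m` a natural number. -/
lemma exists_absv_eq {x : LaurentSeries F} (hx : x ≠ 0) (h1 : absv F x ≤ 1) :
    ∃ m : ℕ, absv F x = (Fintype.card F : ℝ) ^ (-(m : ℤ)) := by
  have h0 : 0 ≤ x.order :=
    (HahnSeries.le_order_iff_forall hx).2 ((absv_le_one_iff F x).1 h1)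
  refine ⟨x.order.toNat, ?_⟩
  rw [absv_of_ne_zero F hx, Int.toNat_of_nonneg h0]

lemma isOpen_ball (n : ℤ) :
    IsOpen {x : LaurentSeries F | absv F x ≤ (Fintype.card F : ℝ) ^ (-n)} := by
  have h : {x : LaurentSeries F | absv F x ≤ (Fintype.card F : ℝ) ^ (-n)} =
      {x | Valued.v x ≤ WithZero.exp (-n)} := by
    ext x
    exact (absv_le_iff F n x).trans (LaurentSeries.valuation_le_iff_coeff_lt_eq_zero F).symm
  have hv : Valued.v (HahnSeries.single n (1 : F) : LaurentSeries F) = WithZero.exp (-n) := by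
    simpa using LaurentSeries.valuation_single_zpow F n
  have h' : {x : LaurentSeries F | Valued.v x ≤ WithZero.exp (-n)} =
      {x : LaurentSeries F | Valued.v.restrict x ≤
        Valued.v.restrict (HahnSeries.single n (1 : F) : LaurentSeries F)} := by
    ext x
    rw [← hv]
    exact (Valuation.restrict_le_iff (Valued.v (R := LaurentSeries F))).symm
  rw [h, h']
  refine Valued.isOpen_closedBall _ ?_
  rw [(Valuation.restrict _).ne_zero_iff]
  simp

lemma measurable_absv : Measurable (absv F) := by
  have hq := one_lt_q F
  have : BorelSpace (LaurentSeries F) := ⟨rfl⟩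
  refine measurable_of_Iio fun c => IsOpen.measurableSet ?_
  -- every open ball is a union of closed balls with radii in `q ^ ℤ`
  have h : absv F ⁻¹' Set.Iio c = ⋃ n : {n : ℤ // (Fintype.card F : ℝ) ^ (-n) < c},
      {x : LaurentSeries F | absv F x ≤ (Fintype.card F : ℝ) ^ (-n.1)} := by
    ext x
    simp only [Set.mem_preimage, Set.mem_Iio, Set.mem_iUnion, Set.mem_ofPred_eq]
    refine ⟨fun hx => ?_, fun ⟨n, hn⟩ => hn.trans_lt n.2⟩
    by_cases h0 : x = 0
    · subst h0
      rw [absv_zero] at hx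
      obtain ⟨n, hn⟩ := exists_pow_lt_of_lt_one hx (inv_lt_one_of_one_lt₀ hq)
      refine ⟨⟨n, by simpa using hn⟩, ?_⟩
      rw [absv_zero]
      positivity
    · exact ⟨⟨x.order, by rwa [absv_of_ne_zero F h0] at hx⟩, (absv_of_ne_zero F h0).le⟩
  rw [h]
  exact isOpen_iUnion fun n => isOpen_ball F n.1

/-- The Laurent polynomial `∑_{a < n} c_a X ^ a`; these represent `𝒪 / X ^ n 𝒪`. -/
noncomputable def trunc {n : ℕ} (c : Fin n → F) : LaurentSeries F :=
  ∑ a : Fin n, HahnSeries.single (a : ℤ) (c a)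

omit [Fintype F] in
variable {F} in
lemma trunc_coeff {n : ℕ} (c : Fin n → F) (b : ℤ) :
    (trunc F c).coeff b = ∑ a : Fin n, if b = (a : ℤ) then c a else 0 := by
  simp only [trunc, HahnSeries.coeff_sum, HahnSeries.coeff_single]
  exact Finset.sum_congr rfl fun a _ => by split_ifs <;> rfl

lemma trunc_mem {n : ℕ} (c : Fin n → F) : trunc F c ∈ intRing F := by
  rw [mem_intRing, absv_le_one_iff]
  intro b hb
  rw [trunc_coeff]
  refine Finset.sum_eq_zero fun a _ => if_neg ?_
  omega

lemma trunc_inj {n : ℕ} {c c' : Fin n → F}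
    (h : absv F (trunc F c - trunc F c') ≤ (Fintype.card F : ℝ) ^ (-(n : ℤ))) : c = c' := by
  rw [absv_le_iff] at h
  funext b
  have := h b (by exact_mod_cast b.2)
  rw [HahnSeries.coeff_sub, trunc_coeff, trunc_coeff] at this
  simpa [Fin.val_inj, sub_eq_zero] using this

end Absv

/-! ### Minors and the norm of the wedge product -/

section Minors

variable (F : Type*) [Field F] [Fintype F]

/-- The rows of a minor may be taken in any order, and repeated. -/
lemma det_le_wedgeNorm {d j : ℕ} (s : Matrix (Fin d) (Fin j) (LaurentSeries F))
    (f : Fin j → Fin d) : absv F (s.submatrix f id).det ≤ wedgeNorm F s := by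
  have h0 : 0 ≤ wedgeNorm F s := Real.iSup_nonneg fun _ => absv_nonneg F _
  by_cases hf : Function.Injective f
  swap
  · obtain ⟨a, b, hab, hne⟩ : ∃ a b, f a = f b ∧ a ≠ b := by
      simpa [Function.Injective] using hf
    rw [Matrix.det_zero_of_row_eq hne, absv_zero]
    · exact h0
    · ext c
      simp [hab]
  -- an injective `f` is the increasing enumeration of its image up to a permutation
  let I : {I : Finset (Fin d) // I.card = j} :=
    ⟨Finset.univ.image f, by simp [Finset.card_image_of_injective _ hf]⟩
  let e := I.1.orderIsoOfFin I.2
  have hmem : ∀ a, f a ∈ I.1 := fun a => Finset.mem_image_of_mem f (Finset.mem_univ a)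
  let g : Fin j → Fin j := fun a => e.symm ⟨f a, hmem a⟩
  have hg : Function.Injective g := by
    intro a b hab
    have := e.symm.injective hab
    exact hf (congrArg Subtype.val this)
  let σ : Equiv.Perm (Fin j) := Equiv.ofBijective g (Finite.injective_iff_bijective.1 hg)
  have hfe : ∀ a, f a = (e (σ a) : Fin d) := by
    intro a
    simp [σ, g]
  have hs : s.submatrix f id =
      (s.submatrix (fun a => (e a : Fin d)) id).submatrix σ id := by
    ext a b
    simp [hfe a]
  have hle : absv F (minor F s I) ≤ wedgeNorm F s :=
    le_ciSup (f := fun I => absv F (minor F s I)) (Set.finite_range _).bddAbove I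
  rw [hs, Matrix.det_permute]
  refine le_of_eq_of_le ?_ hle
  rcases Int.units_eq_one_or (Equiv.Perm.sign σ) with h | h <;>
    simp [h, minor, e, absv_neg]

lemma exists_wedgeNorm_eq {d j : ℕ} (hj : j ≤ d) (s : Matrix (Fin d) (Fin j) (LaurentSeries F)) :
    ∃ f : Fin j → Fin d, Function.Injective f ∧
      wedgeNorm F s = absv F (s.submatrix f id).det := by
  have : Nonempty {I : Finset (Fin d) // I.card = j} := by
    obtain ⟨t, -, ht⟩ := Finset.exists_subset_card_eq
      (s := (Finset.univ : Finset (Fin d))) (n := j) (by simpa using hj)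
    exact ⟨⟨t, ht⟩⟩
  obtain ⟨I, hI⟩ := exists_eq_ciSup_of_finite (f := fun I => absv F (minor F s I))
  refine ⟨fun a => (I.1.orderIsoOfFin I.2 a : Fin d), ?_, hI.symm⟩
  exact Subtype.val_injective.comp (OrderIso.injective _)

/-- If two matrices differ only in their last column, and there only off the rows `f`, the
minors with rows `f` and one more row `l` differ by a multiple of the minor with rows `f` of the
remaining columns. -/
lemma det_snoc_sub {R : Type*} [CommRing R] {d j : ℕ} (A B : Matrix (Fin d) (Fin (j + 1)) R)
    (f : Fin j → Fin d) (l : Fin d) (h : ∀ r (c : Fin j), A r c.castSucc = B r c.castSucc)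
    (hlast : ∀ a, A (f a) (Fin.last j) = B (f a) (Fin.last j)) :
    (A.submatrix (Fin.snoc f l : Fin (j + 1) → Fin d) id).det -
        (B.submatrix (Fin.snoc f l : Fin (j + 1) → Fin d) id).det =
      (A l (Fin.last j) - B l (Fin.last j)) * (A.submatrix f Fin.castSucc).det := by
  rw [Matrix.det_succ_column _ (Fin.last j), Matrix.det_succ_column _ (Fin.last j),
    Fin.sum_univ_castSucc, Fin.sum_univ_castSucc]
  have hsub : ∀ a : Fin (j + 1),
      ((A.submatrix (Fin.snoc f l : Fin (j + 1) → Fin d) id).submatrix a.succAbove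
        (Fin.last j).succAbove) =
      ((B.submatrix (Fin.snoc f l : Fin (j + 1) → Fin d) id).submatrix a.succAbove
        (Fin.last j).succAbove) := by
    intro a
    ext b c
    simp [h]
  have hA : ((A.submatrix (Fin.snoc f l : Fin (j + 1) → Fin d) id).submatrix
      (Fin.last j).succAbove (Fin.last j).succAbove) = A.submatrix f Fin.castSucc := by
    ext b c
    simp
  simp only [← hsub, hA]
  simp only [Matrix.submatrix_apply, Fin.snoc_castSucc, Fin.snoc_last, id, hlast]
  have h1 : ((-1 : R)) ^ ((Fin.last j : ℕ) + (Fin.last j : ℕ)) = 1 :=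
    Even.neg_one_pow ⟨_, rfl⟩
  rw [h1]
  ring

/-- If all maximal minors of the first `j` columns vanish, so do those of `j + 1` columns. -/
lemma wedgeNorm_castSucc_ne_zero {d j : ℕ} (hj : j + 1 ≤ d)
    (s : Matrix (Fin d) (Fin (j + 1)) (LaurentSeries F)) (h : wedgeNorm F s ≠ 0) :
    wedgeNorm F (s.submatrix id Fin.castSucc) ≠ 0 := by
  obtain ⟨f, -, hf⟩ := exists_wedgeNorm_eq F hj s
  intro h0
  apply h
  rw [hf, absv_eq_zero, Matrix.det_succ_column _ (Fin.last j)]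
  refine Finset.sum_eq_zero fun a _ => ?_
  have := det_le_wedgeNorm F (s.submatrix id Fin.castSucc) (f ∘ a.succAbove)
  rw [h0] at this
  have h1 := (absv_eq_zero F).1 (le_antisymm this (absv_nonneg F _))
  rw [Matrix.submatrix_submatrix] at h1 ⊢
  have h2 : (s.submatrix (f ∘ a.succAbove) (id ∘ (Fin.last j).succAbove)).det = 0 := by
    simpa [Fin.succAbove_last, Function.comp_def] using h1
  rw [h2, mul_zero]

end Minors

/-! ### Measure of the level sets -/

section Level

variable (F : Type*) [Field F] [Fintype F]

/-- The norm `‖s₁ ∧ ⋯ ∧ s_j‖` of the wedge product of the first `j` columns of `s`. -/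
noncomputable def partialWedge {d i j : ℕ} (hj : j ≤ i)
    (s : Matrix (Fin d) (Fin i) (LaurentSeries F)) : ℝ :=
  wedgeNorm F (s.submatrix id (Fin.castLE hj))

/-- The integral matrices with `‖s₁ ∧ ⋯ ∧ s_j‖ = q ^ (-m)`. -/
def level (d : ℕ) {i j : ℕ} (hj : j ≤ i) (m : ℕ) :
    Set (Matrix (Fin d) (Fin i) (LaurentSeries F)) :=
  {s | s ∈ intMat F d i ∧ partialWedge F hj s = (Fintype.card F : ℝ) ^ (-(m : ℤ))}

lemma measurable_of_continuous {d i : ℕ}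
    {g : Matrix (Fin d) (Fin i) (LaurentSeries F) → LaurentSeries F} (hg : Continuous g) :
    Measurable fun s => absv F (g s) := by
  have : BorelSpace (Matrix (Fin d) (Fin i) (LaurentSeries F)) := ⟨rfl⟩
  have : BorelSpace (LaurentSeries F) := ⟨rfl⟩
  exact (measurable_absv F).comp hg.measurable

lemma measurable_absv_det {d i j : ℕ} (f : Fin j → Fin d) (g : Fin j → Fin i) :
    Measurable fun s : Matrix (Fin d) (Fin i) (LaurentSeries F) =>
      absv F (s.submatrix f g).det :=
  measurable_of_continuous F (Continuous.matrix_det (continuous_id.matrix_submatrix f g))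

lemma measurable_partialWedge {d i j : ℕ} (hj : j ≤ i) :
    Measurable (partialWedge F hj : Matrix (Fin d) (Fin i) (LaurentSeries F) → ℝ) := by
  unfold partialWedge wedgeNorm
  exact Measurable.iSup fun I => measurable_absv_det F _ (Fin.castLE hj)

lemma measurableSet_intMat (d i : ℕ) : MeasurableSet (intMat F d i) := by
  have h : intMat F d i = ⋂ k, ⋂ l, {s | absv F (s k l) ≤ 1} := by
    ext s
    simp [intMat]
  rw [h]
  refine MeasurableSet.iInter fun k => MeasurableSet.iInter fun l => ?_
  exact measurableSet_le (measurable_of_continuous F (continuous_id.matrix_elem k l))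
    measurable_const

lemma measurableSet_level (d : ℕ) {i j : ℕ} (hj : j ≤ i) (m : ℕ) :
    MeasurableSet (level F d hj m) :=
  (measurableSet_intMat F d i).inter
    (measurableSet_eq_fun (measurable_partialWedge F hj) measurable_const)

omit [Fintype F] in
lemma measurable_translate {d i : ℕ} (T : Matrix (Fin d) (Fin i) (LaurentSeries F)) :
    Measurable fun s => T + s := by
  have : BorelSpace (Matrix (Fin d) (Fin i) (LaurentSeries F)) := ⟨rfl⟩
  exact (continuous_const.add continuous_id).measurable

/-- The part of `level F d _ m` on which the minor of the first `j` columns with rows `f` has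
maximal absolute value and `‖s₁ ∧ ⋯ ∧ s_{j+1}‖ = q ^ (-k)`. -/
def piece {d i j : ℕ} (hj : j + 1 ≤ i) (f : Fin j → Fin d) (m k : ℕ) :
    Set (Matrix (Fin d) (Fin i) (LaurentSeries F)) :=
  {s | (s ∈ level F d (Nat.le_of_succ_le hj) m ∧ s ∈ level F d hj k) ∧
    absv F (s.submatrix f (Fin.castLE (Nat.le_of_succ_le hj))).det =
      (Fintype.card F : ℝ) ^ (-(m : ℤ))}

lemma measurableSet_piece {d i j : ℕ} (hj : j + 1 ≤ i) (f : Fin j → Fin d) (m k : ℕ) :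
    MeasurableSet (piece F hj f m k) :=
  ((measurableSet_level F d _ m).inter (measurableSet_level F d hj k)).inter
    (measurableSet_eq_fun (measurable_absv_det F f _) measurable_const)

/-- The matrix supported in column `j` (counted from `0`), off the rows `f`, with truncated entries there. -/
noncomputable def shift {d i j n : ℕ} (hj : j + 1 ≤ i) (f : Fin j → Fin d)
    (y : {l // l ∉ Set.range f} → Fin n → F) : Matrix (Fin d) (Fin i) (LaurentSeries F) :=
  fun r c => if h : r ∉ Set.range f then
    if c = Fin.castLE hj (Fin.last j) then trunc F (y ⟨r, h⟩) else 0 else 0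

omit [Fintype F] in
variable {F} in
lemma shift_of_ne {d i j n : ℕ} (hj : j + 1 ≤ i) (f : Fin j → Fin d)
    (y : {l // l ∉ Set.range f} → Fin n → F) (r : Fin d) {c : Fin i}
    (hc : c ≠ Fin.castLE hj (Fin.last j)) : shift F hj f y r c = 0 := by
  simp [shift, hc]

lemma castLE_castSucc_ne {i j : ℕ} (hj : j + 1 ≤ i) (c : Fin j) :
    Fin.castLE hj c.castSucc ≠ Fin.castLE hj (Fin.last j) := by
  intro h
  have := congrArg Fin.val h
  simp at this
  omega

/-- The packing estimate. The translates of a piece by the `q ^ (n (d - j))` matrices `shift`,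
`n = k - m`, are pairwise disjoint subsets of the level set it lies in. The subtraction `k - m`
is truncated, so that for `k < m` there is only the trivial translate. -/
lemma piece_measure {d i j : ℕ} (hj : j + 1 ≤ i)
    (μ : Measure (Matrix (Fin d) (Fin i) (LaurentSeries F)))
    (hinv : ∀ a : Matrix (Fin d) (Fin i) (LaurentSeries F), μ.map (fun s => a + s) = μ)
    (f : Fin j → Fin d) (hf : Function.Injective f) (m k : ℕ) :
    (Fintype.card F : ℝ≥0∞) ^ ((k - m) * (d - j)) * μ (piece F hj f m k) ≤
      μ (level F d (Nat.le_of_succ_le hj) m) := by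
  have hq := one_lt_q F
  let Y := {l // l ∉ Set.range f} → Fin (k - m) → F
  let A : Y → Set (Matrix (Fin d) (Fin i) (LaurentSeries F)) := fun y =>
    (fun s => -shift F hj f y + s) ⁻¹' piece F hj f m k
  have hA : ∀ y, μ (A y) = μ (piece F hj f m k) := fun y => by
    rw [← Measure.map_apply (measurable_translate F _) (measurableSet_piece F hj f m k), hinv]
  have hAm : ∀ y, MeasurableSet (A y) := fun y =>
    measurable_translate F _ (measurableSet_piece F hj f m k)
  have hdisj : Pairwise (Function.onFun Disjoint A) := by
    intro y y' hne
    rw [Function.onFun, Set.disjoint_left]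
    intro s hs hs'
    apply hne
    funext l
    -- for `k < m` the index set `Fin (k - m)` of the coefficients is empty
    by_cases hkm : k < m
    · funext a
      exact absurd a.2 (by omega)
    obtain ⟨⟨-, -, hw⟩, hmin⟩ := hs
    obtain ⟨⟨-, -, hw'⟩, -⟩ := hs'
    have key := det_snoc_sub
      ((-shift F hj f y + s).submatrix id (Fin.castLE hj))
      ((-shift F hj f y' + s).submatrix id (Fin.castLE hj)) f l.1
      (by
        intro r c
        have h0 := fun y : Y => shift_of_ne hj f y r (castLE_castSucc_ne hj c)
        rw [Matrix.submatrix_apply, Matrix.submatrix_apply, Matrix.add_apply, Matrix.add_apply,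
          Matrix.neg_apply, Matrix.neg_apply, id, h0 y, h0 y'])
      (by
        intro a
        simp [shift])
    have h1 := (det_le_wedgeNorm F ((-shift F hj f y + s).submatrix id (Fin.castLE hj))
      (Fin.snoc f l.1 : Fin (j + 1) → Fin d)).trans_eq hw
    have h2 := (det_le_wedgeNorm F ((-shift F hj f y' + s).submatrix id (Fin.castLE hj))
      (Fin.snoc f l.1 : Fin (j + 1) → Fin d)).trans_eq hw'
    have h3 := absv_sub_le F k h1 h2
    have hmin' : absv F ((((-shift F hj f y + s).submatrix id (Fin.castLE hj)).submatrix f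
        Fin.castSucc).det) = (Fintype.card F : ℝ) ^ (-(m : ℤ)) := hmin
    rw [key, absv_mul, hmin'] at h3
    have h4 : ((-shift F hj f y + s).submatrix id (Fin.castLE hj)) l.1 (Fin.last j) -
        ((-shift F hj f y' + s).submatrix id (Fin.castLE hj)) l.1 (Fin.last j) =
        trunc F (y' l) - trunc F (y l) := by
      have hl := l.2
      simp only [Set.mem_range] at hl
      simp [shift, hl, neg_add_eq_sub]
    rw [h4, ← le_div_iff₀ (by positivity), ← zpow_sub₀ (by linarith)] at h3
    refine (trunc_inj F (h3.trans_eq ?_)).symm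
    congr 1
    omega
  have hsub : (⋃ y, A y) ⊆ level F d (Nat.le_of_succ_le hj) m := by
    refine Set.iUnion_subset fun y s hs => ?_
    obtain ⟨⟨⟨hmem, hw⟩, -⟩, -⟩ := hs
    refine ⟨fun r c => ?_, ?_⟩
    · have h1 : (-shift F hj f y + s) r c ∈ intRing F := hmem r c
      have h2 : shift F hj f y r c ∈ intRing F := by
        unfold shift
        split_ifs <;> first | exact zero_mem _ | exact trunc_mem F _
      have h3 := add_mem h1 h2
      simpa [Matrix.add_apply, Matrix.neg_apply, mem_intRing] using h3
    · rw [← hw]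
      unfold partialWedge
      congr 1
      refine Matrix.ext fun r c => ?_
      have h5 : shift F hj f y r (Fin.castLE (Nat.le_of_succ_le hj) c) = 0 :=
        shift_of_ne hj f y r (castLE_castSucc_ne hj c)
      change _ = -shift F hj f y r (Fin.castLE (Nat.le_of_succ_le hj) c) +
        s r (Fin.castLE (Nat.le_of_succ_le hj) c)
      rw [h5, neg_zero, zero_add]
      rfl
  have hcard : (Fintype.card Y : ℝ≥0∞) = (Fintype.card F : ℝ≥0∞) ^ ((k - m) * (d - j)) := by
    have : Fintype.card {l // l ∉ Set.range f} = d - j := by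
      rw [Fintype.card_subtype_compl, Fintype.card_fin]
      congr 1
      exact (Set.card_range_of_injective hf).trans (Fintype.card_fin j)
    rw [Fintype.card_fun, Fintype.card_fun, this, Fintype.card_fin, ← pow_mul, Nat.cast_pow]
  calc _ = ∑' y, μ (A y) := by
          simp [hA, tsum_fintype, hcard]
    _ = μ (⋃ y, A y) := (measure_iUnion hdisj hAm).symm
    _ ≤ _ := measure_mono hsub

/-- Passing from `j` to `j + 1` columns in the estimate for the measure of the level sets. -/
lemma level_step {d i j : ℕ} (hj : j + 1 ≤ i) (hd : j + 1 ≤ d)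
    (μ : Measure (Matrix (Fin d) (Fin i) (LaurentSeries F)))
    (hinv : ∀ a : Matrix (Fin d) (Fin i) (LaurentSeries F), μ.map (fun s => a + s) = μ)
    (C : ℝ≥0∞)
    (hC : ∀ m, μ (level F d (Nat.le_of_succ_le hj) m) ≤
      C * (Fintype.card F : ℝ≥0∞)⁻¹ ^ (m * (d - j + 1))) (k : ℕ) :
    μ (level F d hj k) ≤
      ((1 - (Fintype.card F : ℝ≥0∞)⁻¹)⁻¹ * (Fintype.card (Fin j → Fin d) * C)) *
        (Fintype.card F : ℝ≥0∞)⁻¹ ^ (k * (d - j)) := by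
  set q : ℝ≥0∞ := (Fintype.card F : ℝ≥0∞) with hqdef
  have hq0 : q ≠ 0 := by simp [hqdef]
  have hqt : q ≠ ∞ := by simp [hqdef]
  have hq1 : q⁻¹ ≤ 1 := by
    rw [ENNReal.inv_le_one, hqdef]
    exact_mod_cast Fintype.card_pos
  have hcover : level F d hj k ⊆
      ⋃ m, ⋃ f : {f : Fin j → Fin d // Function.Injective f}, piece F hj f.1 m k := by
    intro s hs
    have hne : partialWedge F hj s ≠ 0 := by
      rw [hs.2]
      have := one_lt_q F
      positivity
    have hne' : wedgeNorm F (s.submatrix id (Fin.castLE (Nat.le_of_succ_le hj))) ≠ 0 :=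
      wedgeNorm_castSucc_ne_zero F hd _ hne
    obtain ⟨f, hf, hfs⟩ := exists_wedgeNorm_eq F (Nat.le_of_succ_le hd)
      (s.submatrix id (Fin.castLE (Nat.le_of_succ_le hj)))
    obtain ⟨m, hm⟩ := exists_absv_eq F (absv_ne_zero F (hfs.symm.trans_ne hne'))
      (det_mem_intRing F _ fun a b => hs.1 _ _)
    simp only [Set.mem_iUnion]
    exact ⟨m, ⟨f, hf⟩, ⟨⟨hs.1, hfs.trans hm⟩, hs⟩, hm⟩
  have hpiece : ∀ m (f : {f : Fin j → Fin d // Function.Injective f}),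
      μ (piece F hj f.1 m k) ≤ C * q⁻¹ ^ (k * (d - j)) * q⁻¹ ^ m := by
    intro m f
    have h := (piece_measure F hj μ hinv f.1 f.2 m k).trans (hC m)
    rw [← hqdef] at h
    have h1 : μ (piece F hj f.1 m k) ≤
        q⁻¹ ^ ((k - m) * (d - j)) * (C * q⁻¹ ^ (m * (d - j + 1))) := by
      calc μ (piece F hj f.1 m k)
          = q⁻¹ ^ ((k - m) * (d - j)) * (q ^ ((k - m) * (d - j)) * μ (piece F hj f.1 m k)) := by
            rw [← mul_assoc, ← mul_pow, ENNReal.inv_mul_cancel hq0 hqt, one_pow, one_mul]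
        _ ≤ _ := by gcongr
    refine h1.trans ?_
    have h2 : q⁻¹ ^ ((k - m) * (d - j)) * (C * q⁻¹ ^ (m * (d - j + 1))) =
        C * q⁻¹ ^ ((k - m) * (d - j) + m * (d - j + 1)) := by
      rw [pow_add]
      ring
    rw [h2, mul_assoc, ← pow_add]
    gcongr C * ?_
    refine pow_le_pow_right_of_le_one' hq1 ?_
    -- holds for the truncated subtraction too, since `k ≤ (k - m) + m` in all cases
    have h3 : k * (d - j) ≤ (k - m + m) * (d - j) := Nat.mul_le_mul_right _ (by omega)
    nlinarith
  calc μ (level F d hj k)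
      ≤ ∑' m, ∑' f : {f : Fin j → Fin d // Function.Injective f}, μ (piece F hj f.1 m k) :=
        (measure_mono hcover).trans ((measure_iUnion_le _).trans
          (ENNReal.tsum_le_tsum fun m => measure_iUnion_le _))
    _ ≤ ∑' m : ℕ, (Fintype.card (Fin j → Fin d) : ℝ≥0∞) *
          (C * q⁻¹ ^ (k * (d - j)) * q⁻¹ ^ m) := by
        refine ENNReal.tsum_le_tsum fun m => ?_
        refine (ENNReal.tsum_le_tsum fun f => hpiece m f).trans ?_
        rw [tsum_fintype, Finset.sum_const, nsmul_eq_mul, Finset.card_univ]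
        gcongr
        exact Fintype.card_subtype_le _
    _ = _ := by
        rw [ENNReal.tsum_mul_left, ENNReal.tsum_mul_left, ENNReal.tsum_geometric]
        ring

/-- The decay of the measure of the level sets: the level `m` for the first `j` columns has measure
`O(q ^ (-m (d - j + 1)))`. -/
lemma level_bound {d i : ℕ} (hid : i ≤ d)
    (μ : Measure (Matrix (Fin d) (Fin i) (LaurentSeries F)))
    (hinv : ∀ a : Matrix (Fin d) (Fin i) (LaurentSeries F), μ.map (fun s => a + s) = μ)
    (hnorm : μ (intMat F d i) = 1) (j : ℕ) (hj : j ≤ i) :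
    ∃ C : ℝ≥0∞, C ≠ ∞ ∧ ∀ m, μ (level F d hj m) ≤
      C * (Fintype.card F : ℝ≥0∞)⁻¹ ^ (m * (d - j + 1)) := by
  induction j with
  | zero =>
    refine ⟨1, ENNReal.one_ne_top, fun m => ?_⟩
    -- the wedge product of no columns has norm `1`, so only the level `m = 0` is nonempty
    rcases Nat.eq_zero_or_pos m with rfl | hm
    · simp only [zero_mul, pow_zero, mul_one]
      exact (measure_mono fun s hs => hs.1).trans hnorm.le
    · have : level F d hj m = ∅ := by
        ext s
        simp only [Set.mem_empty_iff_false, iff_false]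
        rintro ⟨-, hs⟩
        obtain ⟨f, -, hf⟩ := exists_wedgeNorm_eq F (Nat.zero_le d)
          (s.submatrix id (Fin.castLE hj))
        rw [Matrix.det_fin_zero, absv_one] at hf
        have h1 : (1 : ℝ) = (Fintype.card F : ℝ) ^ (-(m : ℤ)) := hf.symm.trans hs
        have hlt : (Fintype.card F : ℝ) ^ (-(m : ℤ)) < 1 :=
          zpow_lt_one_of_neg₀ (one_lt_q F) (by omega)
        exact absurd h1 hlt.ne'
      simp [this]
  | succ j ih =>
    obtain ⟨C, hCt, hC⟩ := ih (Nat.le_of_succ_le hj)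
    have h := level_step F hj (hj.trans hid) μ hinv C hC
    rw [← show d - (j + 1) + 1 = d - j by omega] at h
    refine ⟨_, ?_, h⟩
    refine ENNReal.mul_ne_top (ENNReal.inv_ne_top.2 ?_)
      (ENNReal.mul_ne_top (ENNReal.natCast_ne_top _) hCt)
    rw [ne_eq, tsub_eq_zero_iff_le, not_le, ENNReal.inv_lt_one]
    exact_mod_cast Fintype.one_lt_card

/-- The case of a fixed number `i` of columns: each of the `κ` levels contributes at most `C`. -/
lemma integral_bound {d i : ℕ} (hid : i ≤ d)
    (μ : Measure (Matrix (Fin d) (Fin i) (LaurentSeries F)))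
    (hinv : ∀ a : Matrix (Fin d) (Fin i) (LaurentSeries F), μ.map (fun s => a + s) = μ)
    (hnorm : μ (intMat F d i) = 1) :
    ∃ C : ℝ≥0∞, C ≠ ∞ ∧ ∀ κ : ℕ,
      (∫⁻ s in {s ∈ intMat F d i | (Fintype.card F : ℝ) ^ (-(κ : ℤ)) < wedgeNorm F s},
          (ENNReal.ofReal (wedgeNorm F s)) ^ (-((d - i + 1 : ℕ) : ℝ)) ∂μ) ≤ C * κ := by
  have hq := one_lt_q F
  obtain ⟨C, hCt, hC⟩ := level_bound F hid μ hinv hnorm i le_rfl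
  refine ⟨C, hCt, fun κ => ?_⟩
  have hcover : {s ∈ intMat F d i | (Fintype.card F : ℝ) ^ (-(κ : ℤ)) < wedgeNorm F s} ⊆
      ⋃ m : Fin κ, level F d (le_refl i) m := by
    rintro s ⟨hs, hlt⟩
    obtain ⟨f, -, hf⟩ := exists_wedgeNorm_eq F hid s
    have hpos : (0 : ℝ) < (Fintype.card F : ℝ) ^ (-(κ : ℤ)) := by positivity
    have hne : absv F (s.submatrix f id).det ≠ 0 := hf ▸ (hpos.trans hlt).ne'
    obtain ⟨m, hm⟩ := exists_absv_eq F (absv_ne_zero F hne)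
      (det_mem_intRing F (s.submatrix f id) fun a b => hs _ _)
    rw [hf, hm, zpow_lt_zpow_iff_right₀ hq] at hlt
    simp only [Set.mem_iUnion]
    exact ⟨⟨m, by omega⟩, hs, hf.trans hm⟩
  refine (lintegral_mono_set hcover).trans ((lintegral_iUnion_le _ _).trans ?_)
  rw [tsum_fintype]
  refine (Finset.sum_le_sum (g := fun _ => C) fun m _ => ?_).trans ?_
  · set q : ℝ≥0∞ := (Fintype.card F : ℝ≥0∞) with hqdef
    have hq0 : q ≠ 0 := by simp [hqdef]
    have hqt : q ≠ ∞ := by simp [hqdef]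
    have hval : ∀ s ∈ level F d (le_refl i) m,
        (ENNReal.ofReal (wedgeNorm F s)) ^ (-((d - i + 1 : ℕ) : ℝ)) =
          q ^ ((m : ℕ) * (d - i + 1)) := by
      intro s hs
      have h1 : wedgeNorm F s = (Fintype.card F : ℝ) ^ (-((m : ℕ) : ℤ)) := hs.2
      rw [h1, zpow_neg, zpow_natCast, ENNReal.ofReal_inv_of_pos (by positivity),
        ENNReal.ofReal_pow (by positivity), ENNReal.ofReal_natCast, ENNReal.rpow_neg,
        ENNReal.rpow_natCast, ENNReal.inv_pow, inv_inv, pow_mul]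
    rw [setLIntegral_congr_fun (measurableSet_level F d _ _) hval, setLIntegral_const]
    calc _ ≤ q ^ ((m : ℕ) * (d - i + 1)) * (C * q⁻¹ ^ ((m : ℕ) * (d - i + 1))) := by
            gcongr
            exact hC m
      _ = C * (q * q⁻¹) ^ ((m : ℕ) * (d - i + 1)) := by
            rw [mul_pow]
            ring
      _ = C := by rw [ENNReal.mul_inv_cancel hq0 hqt, one_pow, mul_one]
  · simp [mul_comm]

end Level

/-- **Lemma 3.7.** There is `C₂ > 0` depending only on `d` such that for every
`1 ≤ i ≤ d` and every integer `κ ≥ 1`,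
`∫_{{s ∈ M_{d,i}(𝒪) : ‖s₁ ∧ ⋯ ∧ s_i‖ > q^{-κ}}} ‖s₁ ∧ ⋯ ∧ s_i‖^{-(d-i+1)} dμ_{di}(s) ≤ C₂ κ`;
`μ_{di}` is the additive Haar measure normalized so that `μ_{di}(M_{d,i}(𝒪)) = 1`. -/
theorem stmt6 (F : Type*) [Field F] [Fintype F] (d : ℕ)
    (μ : ∀ i : ℕ, MeasureTheory.Measure (Matrix (Fin d) (Fin i) (LaurentSeries F)))
    (hinv : ∀ i : ℕ, ∀ a : Matrix (Fin d) (Fin i) (LaurentSeries F), (μ i).map (fun s => a + s) = μ i)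
    (hnorm : ∀ i : ℕ, μ i (intMat F d i) = 1) :
    ∃ C₂ : ℝ, 0 < C₂ ∧ ∀ i : ℕ, 1 ≤ i → i ≤ d → ∀ κ : ℕ, 1 ≤ κ →
      (∫⁻ s in {s ∈ intMat F d i |
            (Fintype.card F : ℝ) ^ (-(κ : ℤ)) < wedgeNorm F s},
          (ENNReal.ofReal (wedgeNorm F s)) ^ (-((d - i + 1 : ℕ) : ℝ)) ∂(μ i))
        ≤ ENNReal.ofReal (C₂ * κ) := by
  have h : ∀ i : {i : Fin (d + 1) // 1 ≤ i.1}, _ := fun i =>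
    integral_bound F (Nat.lt_succ_iff.1 i.1.2) (μ i.1) (hinv i.1) (hnorm i.1)
  choose C hCt hC using h
  refine ⟨(∑ i, C i).toReal + 1, by positivity, fun i hi hid κ _ => ?_⟩
  refine (hC ⟨⟨i, by omega⟩, hi⟩ κ).trans ?_
  have hsum : ∑ i, C i ≠ ∞ := ENNReal.sum_ne_top.2 fun i _ => hCt i
  rw [ENNReal.ofReal_mul (by positivity), ENNReal.ofReal_natCast]
  gcongr
  calc C ⟨⟨i, by omega⟩, hi⟩ ≤ ∑ i, C i :=
        Finset.single_le_sum (fun _ _ => zero_le) (Finset.mem_univ _)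
    _ = ENNReal.ofReal (∑ i, C i).toReal := (ENNReal.ofReal_toReal hsum).symm
    _ ≤ _ := ENNReal.ofReal_le_ofReal (by linarith)
end

section
/- There exists a constant c > 0 depending only on m and n such that for every i ∈ {1, …, m} and every integer t ≥ 1: ∫_{M_{m+n,i}(𝒪)} ‖g_t · (s₁ ∧ ⋯ ∧ s_i)‖^{−m/i} dμ_{(m+n)i}(s) ≤ c t q^{−mnt}, where s₁, …, s_i are the columns of s. -/
/-!
The estimate reduces to a negative moment of a maximum of minors. In `g_t (s₁ ∧ ⋯ ∧ s_i)` a minor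
on `i` of the first `m` rows (the top rows) is multiplied by `q^{nti}` in absolute value, and one
on `i - 1` top rows and one bottom row by `q^{nti} q^{-(m+n)t}`. Keeping only these minors gives
`‖g_t (s₁ ∧ ⋯ ∧ s_i)‖ ≥ q^{nti} · cutNorm` (`cutNorm_le_wedgeNorm`), and the factor
`(q^{nti})^{-m/i} = q^{-mnt}` reduces the claim to the moment of order `-m/i` of `cutNorm` being
`O(t)`.

The moment is computed column by column, the columns being numbered from `0`. Let `W_j` be the
norm of the wedge product of the top parts of the first `j` columns, and let `w` be a `j × j`
minor with `|w| = W_j`. For each top row `k` not used by `w`, adding `x` to the entry `(k, j)`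
moves the minor which extends `w` by row `k` and column `j` by `x w`, and does not move the minors
which extend `w` by another row. Translating by the `q^r` polynomials of degree `< r` therefore
gives disjoint copies of the event that this minor is at most `q^{-r} |w|`, so that the event has
conditional probability at most `q^{-r}` (`measure_entry_le`). Iterating over the `m - j` free
rows, `W_{j+1} ≤ q^{-r} W_j` has conditional probability `O(q^{-r(m-j)})` (`measure_column_le`),
even after weighting by `W_j^{-β}`. Only the translation invariance of the measure enters, not its
product structure.

Summing over the layers `r` (`rpow_neg_le_layers`, `lintegral_step`), the `-β`-th moment of
`W_{j+1}` is at most that of `W_j` times `O(∑ q^{r(β - (m-j))})`. With `β = m/i` one has `β ≤ m -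
i + 1`. Hence `β < m - j` for the columns `j < i - 1` and the series converges
(`lintegral_topNorm_lt_top`). In the last column `j = i - 1` the exponent may be critical, each
layer then contributing `O(1)`; the minors with one bottom row add a further factor `q^{-(r - T)}`
beyond `r = T = (m+n)t`, so that the sum is `O(T) = O(t)` (`lintegral_cutNorm_le`).
-/


open MeasureTheory
open scoped Classical ENNReal

namespace WedgeEstimate

open HahnSeries

/-! ### The absolute value of `𝔽_q((X))` -/

section AbsoluteValue

variable {F : Type*} [Field F] [Fintype F]

lemma one_lt_card_real : (1 : ℝ) < Fintype.card F := by
  exact_mod_cast Fintype.one_lt_card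

lemma absv_zero : absv F 0 = 0 := by simp [absv]

lemma absv_nonneg (x : LaurentSeries F) : 0 ≤ absv F x := by
  unfold absv; split_ifs <;> positivity

lemma absv_mul (x y : LaurentSeries F) : absv F (x * y) = absv F x * absv F y := by
  have hq : (Fintype.card F : ℝ) ≠ 0 := (zero_lt_one.trans (one_lt_card_real (F := F))).ne'
  by_cases hx : x = 0
  · simp [absv, hx]
  by_cases hy : y = 0
  · simp [absv, hy]
  simp only [absv, hx, hy, mul_eq_zero, or_self, if_false]
  rw [HahnSeries.order_mul hx hy, neg_add, zpow_add₀ hq]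

lemma absv_neg (x : LaurentSeries F) : absv F (-x) = absv F x := by
  simp [absv, HahnSeries.order_neg]

/-- The ball of radius `q^{-D}` consists of the series supported in degrees `≥ D`. -/
lemma absv_le_zpow_iff (x : LaurentSeries F) (D : ℤ) :
    absv F x ≤ (Fintype.card F : ℝ) ^ (-D) ↔ ∀ n < D, x.coeff n = 0 := by
  by_cases hx : x = 0
  · simp only [hx, absv_zero, coeff_zero, implies_true, iff_true]; positivity
  simp only [absv, hx, if_false]
  rw [zpow_le_zpow_iff_right₀ one_lt_card_real, neg_le_neg_iff]
  constructor
  · intro h n hn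
    exact coeff_eq_zero_of_lt_order (hn.trans_le h)
  · intro h
    by_contra! hlt
    exact hx (by simpa using h _ hlt)

lemma absv_sub_le (x y : LaurentSeries F) {c : ℝ} (hx : absv F x ≤ c) (hy : absv F y ≤ c) :
    absv F (x - y) ≤ c := by
  by_cases h0 : x = 0
  · simpa [h0, absv_neg] using hy
  by_cases h1 : y = 0
  · simpa [h1] using hx
  have key : ∀ D : ℤ, absv F x ≤ (Fintype.card F : ℝ) ^ (-D) →
      absv F y ≤ (Fintype.card F : ℝ) ^ (-D) → absv F (x - y) ≤ (Fintype.card F : ℝ) ^ (-D) := by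
    intro D
    simp only [absv_le_zpow_iff]
    intro h h' n hn
    simp [h n hn, h' n hn]
  rcases le_total (absv F x) (absv F y) with h | h
  · have e : absv F y = (Fintype.card F : ℝ) ^ (-y.order) := by simp [absv, h1]
    exact (key y.order (e ▸ h) e.le).trans (e ▸ hy)
  · have e : absv F x = (Fintype.card F : ℝ) ^ (-x.order) := by simp [absv, h0]
    exact (key x.order e.le (e ▸ h)).trans (e ▸ hx)

lemma isOpen_absv_lt {r : ℝ} (hr : 0 < r) : IsOpen {x : LaurentSeries F | absv F x < r} := by
  obtain ⟨D, hD⟩ : ∃ D : ℕ, ((Fintype.card F : ℝ)⁻¹) ^ D < r :=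
    exists_pow_lt_of_lt_one hr (inv_lt_one_of_one_lt₀ one_lt_card_real)
  rw [isOpen_iff_mem_nhds]
  intro x hx
  rw [Valued.mem_nhds]
  have hne : (Valued.v : Valuation (LaurentSeries F) _).restrict (single (D : ℤ) (1 : F)) ≠ 0 := by
    simp
  refine ⟨Units.mk0 _ hne, ?_⟩
  intro y hy
  have hy' : Valued.v (y - x) ≤ WithZero.exp (-(D : ℤ)) := by
    rw [← LaurentSeries.valuation_single_zpow F]
    exact ((Valuation.restrict_lt_iff _).1 hy).le
  rw [LaurentSeries.valuation_le_iff_coeff_lt_eq_zero F, ← absv_le_zpow_iff, zpow_neg, zpow_natCast,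
    ← inv_pow, ← absv_neg, neg_sub] at hy'
  have h := absv_sub_le x (x - y) (le_max_left _ _) (le_max_right _ _)
  rw [sub_sub_cancel] at h
  exact h.trans_lt (max_lt hx (hy'.trans_lt hD))

lemma measurable_absv : Measurable (absv F) := by
  have : BorelSpace (LaurentSeries F) := ⟨rfl⟩
  refine measurable_of_Ici fun r => ?_
  rcases le_or_gt r 0 with h | h
  · convert MeasurableSet.univ
    ext x; simpa using h.trans (absv_nonneg x)
  · have : absv F ⁻¹' Set.Ici r = {x | absv F x < r}ᶜ := by ext; simp
    rw [this]
    exact (isOpen_absv_lt h).measurableSet.compl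

/-- The absolute value of `K`, valued in `[0, ∞]`. -/
noncomputable def aE (x : LaurentSeries F) : ℝ≥0∞ := ENNReal.ofReal (absv F x)

variable (F) in
/-- The residue cardinality `q`, as an extended nonnegative real. -/
noncomputable def Q : ℝ≥0∞ := (Fintype.card F : ℝ≥0∞)

lemma Q_ne_top {F : Type*} [Fintype F] : Q F ≠ ⊤ := by simp [Q]

lemma one_lt_Q : 1 < Q F := by
  unfold Q; exact_mod_cast Fintype.one_lt_card

lemma Q_ne_zero : Q F ≠ 0 := (zero_lt_one.trans one_lt_Q).ne'

lemma measurable_aE : Measurable (aE (F := F)) := measurable_absv.ennreal_ofReal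

lemma aE_ne_top (x : LaurentSeries F) : aE x ≠ ⊤ := ENNReal.ofReal_ne_top

lemma aE_mul (x y : LaurentSeries F) : aE (x * y) = aE x * aE y := by
  rw [aE, absv_mul, ENNReal.ofReal_mul (absv_nonneg x)]; rfl

lemma aE_one : aE (1 : LaurentSeries F) = 1 := by
  simp [aE, absv]

lemma aE_pow (x : LaurentSeries F) (k : ℕ) : aE (x ^ k) = aE x ^ k := by
  induction k with
  | zero => simp [aE_one]
  | succ k ih => rw [pow_succ, aE_mul, ih, pow_succ]

lemma aE_eq_zero {x : LaurentSeries F} : aE x = 0 ↔ x = 0 := by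
  rw [aE, ENNReal.ofReal_eq_zero]
  constructor
  · intro h
    by_contra hx
    simp only [absv, hx, if_false] at h
    have : (0 : ℝ) < (Fintype.card F : ℝ) ^ (-x.order) :=
      zpow_pos (zero_lt_one.trans one_lt_card_real) _
    linarith
  · rintro rfl; simp [absv_zero]

lemma aE_sub_le (x y : LaurentSeries F) {c : ℝ≥0∞} (hx : aE x ≤ c) (hy : aE y ≤ c) :
    aE (x - y) ≤ c := by
  have h : absv F (x - y) ≤ max (absv F x) (absv F y) :=
    absv_sub_le x y (le_max_left _ _) (le_max_right _ _)
  refine (ENNReal.ofReal_le_ofReal h).trans ?_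
  rw [ENNReal.ofReal_max]
  exact max_le hx hy

lemma ofReal_card_zpow (D : ℤ) : ENNReal.ofReal ((Fintype.card F : ℝ) ^ D) = Q F ^ D := by
  have : (0:ℝ) < Fintype.card F := zero_lt_one.trans one_lt_card_real
  cases D with
  | ofNat k => simp [Q, ENNReal.ofReal_pow this.le]
  | negSucc k =>
    rw [zpow_negSucc, zpow_negSucc, ENNReal.ofReal_inv_of_pos (by positivity),
      ENNReal.ofReal_pow this.le]
    simp [Q]

lemma aE_le_iff (x : LaurentSeries F) (D : ℕ) :
    aE x ≤ (Q F ^ D)⁻¹ ↔ ∀ n < (D : ℤ), x.coeff n = 0 := by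
  have : (Q F ^ D)⁻¹ = Q F ^ (-(D : ℤ)) := by rw [ENNReal.zpow_neg, zpow_natCast]
  rw [this, ← ofReal_card_zpow, ← absv_le_zpow_iff, aE, ENNReal.ofReal_le_ofReal_iff]
  positivity

lemma aE_Xu_zpow (k : ℤ) : aE (Xu F ^ k) = Q F ^ (-k) := by
  rw [← ofReal_card_zpow, aE]
  congr 1
  have : Xu F ^ k = single k (1 : F) := by
    rw [Xu, ← RatFunc.single_zpow]
  rw [this]
  simp [absv]

/-- The polynomial in `X` of degree `< r` with prescribed coefficients: these represent the
classes of `𝒪` modulo `X^r`. -/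
noncomputable def poly {r : ℕ} (c : Fin r → F) : LaurentSeries F :=
  HahnSeries.ofPowerSeries ℤ F (PowerSeries.mk fun n => if h : n < r then c ⟨n, h⟩ else 0)

lemma aE_poly_le {r : ℕ} (c : Fin r → F) : aE (poly c) ≤ 1 := by
  have := (aE_le_iff (poly c) 0).2 (by
    intro n hn
    rw [poly, PowerSeries.coeff_coe, if_pos (by simpa using hn)])
  simpa using this

lemma poly_inj {r : ℕ} {c c' : Fin r → F} (h : aE (poly c - poly c') ≤ (Q F ^ r)⁻¹) : c = c' := by
  rw [aE_le_iff] at h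
  ext k
  have := h k (by exact_mod_cast k.2)
  simp only [poly, HahnSeries.coeff_sub, PowerSeries.coeff_coe] at this
  simpa [sub_eq_zero, not_lt.2 (Int.natCast_nonneg (k : ℕ))] using this

end AbsoluteValue

/-! ### Translation invariance and the probability of small minors -/

section Translation

variable {F : Type*} [Field F] [Fintype F] {d i : ℕ}

instance : BorelSpace (Matrix (Fin d) (Fin i) (LaurentSeries F)) := ⟨rfl⟩

/-- The measure `ρ` is invariant under adding an integral element to the entry `(k, l)`. -/
def EntryInvariant (ρ : Measure (Matrix (Fin d) (Fin i) (LaurentSeries F))) (k : Fin d)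
    (l : Fin i) : Prop :=
  ∀ x : LaurentSeries F, aE x ≤ 1 → MeasurePreserving (fun s => Matrix.single k l x + s) ρ ρ

lemma EntryInvariant.withDensity {ρ : Measure (Matrix (Fin d) (Fin i) (LaurentSeries F))}
    {k : Fin d} {l : Fin i} (h : EntryInvariant ρ k l)
    {φ : Matrix (Fin d) (Fin i) (LaurentSeries F) → ℝ≥0∞} (hφ : Measurable φ)
    (hinv : ∀ x s, φ (Matrix.single k l x + s) = φ s) :
    EntryInvariant (ρ.withDensity φ) k l := by
  intro x hx
  refine ⟨(h x hx).measurable, ?_⟩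
  ext B hB
  rw [Measure.map_apply (h x hx).measurable hB, withDensity_apply _ hB,
    withDensity_apply _ ((h x hx).measurable hB),
    ← (h x hx).setLIntegral_comp_preimage hB hφ]
  simp only [hinv]

lemma entryInvariant_restrict_intMat {μ : Measure (Matrix (Fin d) (Fin i) (LaurentSeries F))}
    (hinv : ∀ a, μ.map (fun s => a + s) = μ) (hm : MeasurableSet (intMat F d i))
    (k : Fin d) (l : Fin i) : EntryInvariant (μ.restrict (intMat F d i)) k l := by
  intro x hx
  have hmp : MeasurePreserving (fun s => Matrix.single k l x + s) μ μ :=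
    ⟨(continuous_const.add continuous_id).measurable, hinv _⟩
  have hx' : absv F x ≤ 1 := by
    simpa [aE] using hx
  have hpre : (fun s => Matrix.single k l x + s) ⁻¹' (intMat F d i) = intMat F d i := by
    have hs : ∀ a b, absv F (Matrix.single k l x a b) ≤ 1 := by
      intro a b
      rw [Matrix.single_apply]
      split_ifs
      · exact hx'
      · simp [absv_zero]
    ext s
    constructor
    · intro h a b
      have h1 : absv F ((Matrix.single k l x + s) a b) ≤ 1 := h a b
      have := absv_sub_le _ _ h1 (hs a b)
      simpa using this
    · intro h a b
      have h1 : absv F (-(s a b)) ≤ 1 := by rw [absv_neg]; exact h a b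
      have := absv_sub_le _ _ (hs a b) h1
      simpa using this
  have := hmp.restrict_preimage hm
  rwa [hpre] at this

lemma measurableSet_intMat : MeasurableSet (intMat F d i) := by
  have : intMat F d i = ⋂ k, ⋂ l, {s | absv F (s k l) ≤ 1} := by
    ext; simp [intMat]
  rw [this]
  refine MeasurableSet.iInter fun k => MeasurableSet.iInter fun l => ?_
  have : BorelSpace (LaurentSeries F) := ⟨rfl⟩
  exact measurableSet_le (measurable_absv.comp (continuous_id.matrix_elem k l).measurable)
    measurable_const

/-- If moving the entry `(k, l)` by `x` moves `D` by `x w` and fixes `w ≠ 0` and the event `E`, then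
`|D| ≤ q^{-r} |w|` has conditional probability at most `q^{-r}` given `E`: the translates of this event by the `q^r`
polynomials of degree `< r` are pairwise disjoint. -/
lemma measure_entry_le {ρ : Measure (Matrix (Fin d) (Fin i) (LaurentSeries F))}
    {k : Fin d} {l : Fin i} (hρ : EntryInvariant ρ k l)
    {E : Set (Matrix (Fin d) (Fin i) (LaurentSeries F))} (hE : MeasurableSet E)
    (hEinv : ∀ x s, Matrix.single k l x + s ∈ E ↔ s ∈ E)
    {w D : Matrix (Fin d) (Fin i) (LaurentSeries F) → LaurentSeries F}
    (hw : Measurable fun s => aE (w s)) (hD : Measurable fun s => aE (D s))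
    (hwinv : ∀ x s, w (Matrix.single k l x + s) = w s)
    (hDinv : ∀ x s, D (Matrix.single k l x + s) = D s + x * w s) (r : ℕ) :
    ρ (E ∩ {s | w s ≠ 0 ∧ aE (D s) ≤ (Q F ^ r)⁻¹ * aE (w s)}) ≤ (Q F ^ r)⁻¹ * ρ E := by
  set B := E ∩ {s | w s ≠ 0 ∧ aE (D s) ≤ (Q F ^ r)⁻¹ * aE (w s)} with hB
  have hBm : MeasurableSet B := by
    refine hE.inter (MeasurableSet.inter ?_ (measurableSet_le hD (measurable_const.mul hw)))
    have : {s | w s ≠ 0} = {s | aE (w s) = 0}ᶜ := by ext; simp [aE_eq_zero]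
    change MeasurableSet {s | w s ≠ 0}
    rw [this]
    exact (measurableSet_eq_fun hw measurable_const).compl
  let U : (Fin r → F) → Set (Matrix (Fin d) (Fin i) (LaurentSeries F)) :=
    fun c => (fun s => Matrix.single k l (poly c) + s) ⁻¹' B
  have hUm : ∀ c, MeasurableSet (U c) := fun c => (hρ _ (aE_poly_le c)).measurable hBm
  have hU : ∀ c, ρ (U c) = ρ B := fun c =>
    (hρ _ (aE_poly_le c)).measure_preimage hBm.nullMeasurableSet
  have hUE : ⋃ c, U c ⊆ E := by
    refine Set.iUnion_subset fun c s hs => ?_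
    exact (hEinv _ s).1 hs.1
  have hdis : Pairwise (Function.onFun Disjoint U) := by
    intro c c' hcc
    refine Set.disjoint_left.2 fun s hs hs' => hcc ?_
    obtain ⟨-, hw0, h1⟩ := hs
    obtain ⟨-, -, h2⟩ := hs'
    rw [hwinv, hDinv] at h1 h2
    rw [hwinv] at hw0
    have h3 := aE_sub_le _ _ h1 h2
    rw [add_sub_add_left_eq_sub, ← sub_mul, aE_mul] at h3
    exact poly_inj ((ENNReal.mul_le_mul_iff_left (by simpa [aE_eq_zero] using hw0)
      (aE_ne_top _)).1 h3)
  have hsum : Q F ^ r * ρ B = ρ (⋃ c, U c) := by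
    rw [measure_iUnion hdis hUm]
    simp [hU, Q]
  have hr0 : Q F ^ r ≠ 0 := pow_ne_zero _ Q_ne_zero
  have hrt : Q F ^ r ≠ ⊤ := ENNReal.pow_ne_top Q_ne_top
  calc ρ B = (Q F ^ r)⁻¹ * (Q F ^ r * ρ B) := by
        rw [← mul_assoc, ENNReal.inv_mul_cancel hr0 hrt, one_mul]
    _ ≤ _ := by rw [hsum]; gcongr

/-- Independence over the rows `k ∈ S` of column `l`: if the entry `(k, l)` moves only `D k`, the
events `|D k| ≤ q^{-e k} |w|` hold simultaneously with probability at most `∏ q^{-e k}`. -/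
lemma measure_column_le {ρ : Measure (Matrix (Fin d) (Fin i) (LaurentSeries F))}
    {l : Fin i} (hρ : ∀ k, EntryInvariant ρ k l)
    {w : Matrix (Fin d) (Fin i) (LaurentSeries F) → LaurentSeries F}
    {D : Fin d → Matrix (Fin d) (Fin i) (LaurentSeries F) → LaurentSeries F}
    (hw : Measurable fun s => aE (w s)) (hD : ∀ k, Measurable fun s => aE (D k s))
    (hwinv : ∀ k x s, w (Matrix.single k l x + s) = w s) (S : Finset (Fin d))
    (hDinv : ∀ k ∈ S, ∀ k' x s,
      D k' (Matrix.single k l x + s) = D k' s + if k' = k then x * w s else 0)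
    (e : Fin d → ℕ) :
    ρ {s | w s ≠ 0 ∧ ∀ k ∈ S, aE (D k s) ≤ (Q F ^ e k)⁻¹ * aE (w s)}
      ≤ (∏ k ∈ S, (Q F ^ e k)⁻¹) * ρ Set.univ := by
  induction S using Finset.induction_on with
  | empty => simpa using measure_mono (Set.subset_univ _)
  | insert k S hk ih =>
    have ih := ih fun k' hk' => hDinv k' (Finset.mem_insert_of_mem hk')
    set E := {s | w s ≠ 0 ∧ ∀ k ∈ S, aE (D k s) ≤ (Q F ^ e k)⁻¹ * aE (w s)} with hE
    have hw0 : MeasurableSet {s | w s ≠ 0} := by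
      have : {s | w s ≠ 0} = {s | aE (w s) = 0}ᶜ := by ext; simp [aE_eq_zero]
      rw [this]
      exact (measurableSet_eq_fun hw measurable_const).compl
    have hEm : MeasurableSet E := by
      have : E = {s | w s ≠ 0} ∩ ⋂ k ∈ S, {s | aE (D k s) ≤ (Q F ^ e k)⁻¹ * aE (w s)} := by
        ext; simp [hE]
      rw [this]
      exact hw0.inter (Finset.measurableSet_biInter _ fun k _ =>
        measurableSet_le (hD k) (measurable_const.mul hw))
    have hEinv : ∀ x s, Matrix.single k l x + s ∈ E ↔ s ∈ E := by
      intro x s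
      simp only [hE, Set.mem_ofPred_eq, hwinv]
      refine and_congr_right fun _ => forall₂_congr fun k' hk' => ?_
      rw [hDinv k (Finset.mem_insert_self _ _), if_neg (by rintro rfl; exact hk hk'), add_zero]
    have key := measure_entry_le (hρ k) hEm hEinv hw (hD k) (hwinv k)
      (fun x s => by rw [hDinv k (Finset.mem_insert_self _ _), if_pos rfl]) (e k)
    rw [Finset.prod_insert hk, mul_assoc]
    refine (measure_mono ?_).trans (key.trans (by gcongr))
    rintro s ⟨h1, h2⟩
    exact ⟨⟨h1, fun k' hk' => h2 k' (Finset.mem_insert_of_mem hk')⟩, h1,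
      h2 k (Finset.mem_insert_self _ _)⟩

end Translation

/-! ### Minors -/

section Minors

variable {F : Type*} [Field F] {d i j : ℕ}

/-- The minor of `s` on the (ordered, possibly repeated) rows `f` and columns `c`. -/
noncomputable def dt (f : Fin j → Fin d) (c : Fin j → Fin i)
    (s : Matrix (Fin d) (Fin i) (LaurentSeries F)) : LaurentSeries F :=
  (s.submatrix f c).det

lemma measurable_dt [Fintype F] (f : Fin j → Fin d) (c : Fin j → Fin i) :
    Measurable fun s : Matrix (Fin d) (Fin i) (LaurentSeries F) => aE (dt f c s) := by
  have : BorelSpace (LaurentSeries F) := ⟨rfl⟩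
  exact measurable_aE.comp ((continuous_id.matrix_submatrix f c).matrix_det).measurable

lemma dt_single_add_of_notMem (f : Fin j → Fin d) (c : Fin j → Fin i) {l : Fin i}
    (hl : ∀ a, c a ≠ l) (k : Fin d) (x : LaurentSeries F)
    (s : Matrix (Fin d) (Fin i) (LaurentSeries F)) :
    dt f c (Matrix.single k l x + s) = dt f c s := by
  unfold dt
  congr 1
  refine Matrix.ext fun a b => ?_
  simp [(hl b).symm]

/-- Effect on a determinant of a change of the bottom right corner, by Laplace expansion along
the last row. -/
lemma det_add_corner {R : Type*} [CommRing R] (M N : Matrix (Fin (j + 1)) (Fin (j + 1)) R) (y : R)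
    (h : ∀ a b, M a b = N a b + if a = Fin.last j ∧ b = Fin.last j then y else 0) :
    M.det = N.det + y * (N.submatrix Fin.castSucc Fin.castSucc).det := by
  rw [Matrix.det_succ_row M (Fin.last j), Matrix.det_succ_row N (Fin.last j)]
  have hmin : ∀ b : Fin (j + 1), M.submatrix (Fin.last j).succAbove b.succAbove
      = N.submatrix (Fin.last j).succAbove b.succAbove := by
    intro b
    refine Matrix.ext fun a b' => ?_
    simp [h]
  simp only [hmin]
  rw [Fin.sum_univ_castSucc, Fin.sum_univ_castSucc, add_assoc]
  congr 1
  · refine Finset.sum_congr rfl fun b _ => ?_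
    simp [h]
  · have hlast : N.submatrix (Fin.last j).succAbove (Fin.last j).succAbove
        = N.submatrix Fin.castSucc Fin.castSucc := by
      refine Matrix.ext fun a b' => ?_
      simp
    have hsgn : ((-1 : R)) ^ (((Fin.last j : Fin (j + 1)) : ℕ)
        + ((Fin.last j : Fin (j + 1)) : ℕ)) = 1 := Even.neg_one_pow ⟨_, rfl⟩
    rw [hlast, hsgn, h]
    simp only [and_self, if_true]
    ring

/-- With `k` outside the rows `f` and `l` outside the columns `c`, the entry `(k, l)` occurs in a
minor extending `(f, c)` by a row `k'` and the column `l` only if `k' = k`, and then in the corner,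
with cofactor `dt f c s`. -/
lemma dt_snoc_single_add (f : Fin j → Fin d) (c : Fin j → Fin i) {l : Fin i}
    (hl : ∀ a, c a ≠ l) {k : Fin d} (hk : ∀ a, f a ≠ k) (k' : Fin d) (x : LaurentSeries F)
    (s : Matrix (Fin d) (Fin i) (LaurentSeries F)) :
    dt (Fin.snoc f k' : Fin (j + 1) → Fin d) (Fin.snoc c l : Fin (j + 1) → Fin i)
      (Matrix.single k l x + s)
      = dt (Fin.snoc f k' : Fin (j + 1) → Fin d) (Fin.snoc c l : Fin (j + 1) → Fin i) s
        + if k' = k then x * dt f c s else 0 := by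
  unfold dt
  rw [det_add_corner _ (s.submatrix (Fin.snoc f k' : Fin (j + 1) → Fin d)
    (Fin.snoc c l : Fin (j + 1) → Fin i)) (if k' = k then x else 0)]
  · have : (s.submatrix (Fin.snoc f k' : Fin (j + 1) → Fin d)
        (Fin.snoc c l : Fin (j + 1) → Fin i)).submatrix Fin.castSucc Fin.castSucc
        = s.submatrix f c := by
      refine Matrix.ext fun a b => ?_
      simp
    rw [this, ite_mul, zero_mul]
  · intro a b
    rw [Matrix.submatrix_apply, Matrix.submatrix_apply, Matrix.add_apply, add_comm]
    congr 1
    rw [Matrix.single_apply]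
    refine Fin.lastCases ?_ (fun a => ?_) a
    · refine Fin.lastCases ?_ (fun b => ?_) b
      · simp [eq_comm]
      · simp [(hl b).symm]
    · simp [(hk a).symm]

lemma aE_dt_le_wedgeNorm [Fintype F] (f : Fin i → Fin d)
    (s : Matrix (Fin d) (Fin i) (LaurentSeries F)) :
    aE (dt f id s) ≤ ENNReal.ofReal (wedgeNorm F s) := by
  by_cases hf : Function.Injective f
  · refine ENNReal.ofReal_le_ofReal ?_
    let I : {I : Finset (Fin d) // I.card = i} :=
      ⟨Finset.univ.image f, by rw [Finset.card_image_of_injective _ hf]; simp⟩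
    let σ0 : Fin i → Fin i := fun a =>
      (I.1.orderIsoOfFin I.2).symm ⟨f a, Finset.mem_image_of_mem _ (Finset.mem_univ a)⟩
    have hσ0 : Function.Injective σ0 := by
      intro a b hab
      have := (I.1.orderIsoOfFin I.2).symm.injective hab
      exact hf (by simpa using this)
    let σ : Equiv.Perm (Fin i) := Equiv.ofBijective σ0 (Finite.injective_iff_bijective.1 hσ0)
    have hsub : s.submatrix f id
        = (s.submatrix (fun a : Fin i => ((I.1.orderIsoOfFin I.2 a : {x // x ∈ I.1}) : Fin d))
            id).submatrix σ id := by
      refine Matrix.ext fun a b => ?_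
      change s (f a) b = s ((I.1.orderIsoOfFin I.2 ((I.1.orderIsoOfFin I.2).symm
        ⟨f a, Finset.mem_image_of_mem _ (Finset.mem_univ a)⟩) : {x // x ∈ I.1}) : Fin d) b
      rw [OrderIso.apply_symm_apply]
    have habs : absv F (dt f id s) = absv F (minor F s I) := by
      rw [dt, hsub, Matrix.det_permute, minor]
      rcases Int.units_eq_one_or (Equiv.Perm.sign σ) with h | h <;> simp [h, absv_neg]
    rw [habs]
    exact le_ciSup (f := fun I => absv F (minor F s I)) (Set.finite_range _).bddAbove I
  · obtain ⟨a, b, hab, hne⟩ : ∃ a b, f a = f b ∧ a ≠ b := by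
      simpa [Function.Injective] using hf
    have : dt f id s = 0 := Matrix.det_zero_of_row_eq hne (by ext; simp [hab])
    simp [this, aE, absv_zero]

end Minors

/-! ### Layer sums -/

section Layers

lemma rpow_neg_anti {Z W : ℝ≥0∞} {β : ℝ} (hβ : 0 ≤ β) (h : W ≤ Z) : Z ^ (-β) ≤ W ^ (-β) := by
  rw [ENNReal.rpow_neg, ENNReal.rpow_neg]
  exact ENNReal.inv_le_inv.2 (ENNReal.rpow_le_rpow h hβ)

/-- Layer-cake bound: `Z^{-β}` is controlled by `W^{-β}` and the events `Z ≤ q^{-r} W`. -/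
lemma rpow_neg_le_layers {q Z W : ℝ≥0∞} (hq : 1 < q) (hqt : q ≠ ⊤) (hW : W ≠ ⊤) {β : ℝ}
    (hβ : 0 < β) :
    Z ^ (-β) ≤ W ^ (-β) * (1 + q ^ β * ∑' r : ℕ, (q ^ r) ^ β *
      Set.indicator {r : ℕ | W ≠ 0 ∧ Z ≤ (q ^ r)⁻¹ * W} 1 r) := by
  have hq0 : q ≠ 0 := (zero_lt_one.trans hq).ne'
  by_cases hW0 : W = 0
  · rw [hW0, ENNReal.zero_rpow_of_neg (neg_lt_zero.2 hβ), ENNReal.top_mul (by simp)]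
    exact le_top
  by_cases hWZ : W ≤ Z
  · calc Z ^ (-β) ≤ W ^ (-β) := rpow_neg_anti hβ.le hWZ
      _ = W ^ (-β) * 1 := (mul_one _).symm
      _ ≤ _ := by gcongr; exact le_self_add
  have hqr : ∀ r : ℕ, 1 ≤ (q ^ r) ^ β := fun r =>
    ENNReal.one_le_rpow (one_le_pow₀ hq.le) hβ
  by_cases hZ0 : Z = 0
  · have hsum : ∑' r : ℕ, (q ^ r) ^ β *
        Set.indicator {r : ℕ | W ≠ 0 ∧ Z ≤ (q ^ r)⁻¹ * W} (1 : ℕ → ℝ≥0∞) r = ⊤ := by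
      rw [eq_top_iff, ← ENNReal.tsum_const_eq_top_of_ne_zero (α := ℕ) (c := 1) one_ne_zero]
      refine ENNReal.tsum_le_tsum fun r => ?_
      rw [Set.indicator_of_mem (by simp [hW0, hZ0])]
      simpa using hqr r
    rw [hsum, ENNReal.mul_top (by simp [hq0, hqt]), add_top, ENNReal.mul_top]
    · exact le_top
    · simp [ENNReal.rpow_eq_zero_iff, hW0, hW]
  push Not at hWZ
  have hex : ∃ r : ℕ, (q ^ r)⁻¹ * W < Z := by
    have ht : Filter.Tendsto (fun r : ℕ => (q⁻¹) ^ r * W) Filter.atTop (nhds (0 * W)) :=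
      ENNReal.Tendsto.mul_const (ENNReal.tendsto_pow_atTop_nhds_zero_of_lt_one
        (ENNReal.inv_lt_one.2 hq)) (Or.inr hW)
    rw [zero_mul] at ht
    obtain ⟨r, hr⟩ := (ht.eventually_lt_const (pos_iff_ne_zero.2 hZ0)).exists
    exact ⟨r, by rwa [ENNReal.inv_pow]⟩
  obtain ⟨r, hr1, hr2⟩ : ∃ r : ℕ, (q ^ (r + 1))⁻¹ * W < Z ∧ Z ≤ (q ^ r)⁻¹ * W := by
    have h0 : Nat.find hex ≠ 0 := by
      intro h
      have := Nat.find_spec hex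
      rw [h] at this
      simp only [pow_zero, inv_one, one_mul] at this
      exact absurd this hWZ.not_gt
    obtain ⟨r, hr⟩ := Nat.exists_eq_succ_of_ne_zero h0
    refine ⟨r, ?_, ?_⟩
    · have := Nat.find_spec hex
      rwa [hr] at this
    · exact not_lt.1 (Nat.find_min hex (m := r) (by omega))
  calc Z ^ (-β) ≤ ((q ^ (r + 1))⁻¹ * W) ^ (-β) :=
        rpow_neg_anti hβ.le hr1.le
    _ = W ^ (-β) * (q ^ β * ((q ^ r) ^ β * 1)) := by
        have hqr0 : (q ^ (r + 1))⁻¹ ≠ 0 := by simp [hqt]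
        have hqrt : (q ^ (r + 1))⁻¹ ≠ ⊤ := by simp [hq0]
        rw [ENNReal.mul_rpow_of_ne_zero hqr0 hW0, ENNReal.inv_rpow, ENNReal.rpow_neg, inv_inv,
          pow_succ, ENNReal.mul_rpow_of_nonneg _ _ hβ.le, mul_one]
        ring
    _ ≤ _ := by
        gcongr
        refine le_add_left ?_
        gcongr
        refine le_trans ?_ (ENNReal.le_tsum r)
        gcongr
        rw [Set.indicator_of_mem (show r ∈ {r : ℕ | W ≠ 0 ∧ Z ≤ (q ^ r)⁻¹ * W} from ⟨hW0, hr2⟩)]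
        rfl

lemma tsum_layers_lt_top {q : ℝ≥0∞} (hq : 1 < q) (hqt : q ≠ ⊤) {β : ℝ} {κ : ℕ}
    (hβ : β < κ) (N : ℕ) :
    ∑' r : ℕ, (q ^ r) ^ β * (N * ((q ^ r)⁻¹) ^ κ) < ⊤ := by
  have hq0 : q ≠ 0 := (zero_lt_one.trans hq).ne'
  have hterm : ∀ r : ℕ, (q ^ r) ^ β * (N * ((q ^ r)⁻¹) ^ κ) = N * (q ^ (β - κ)) ^ r := by
    intro r
    rw [← ENNReal.rpow_natCast_mul, ← ENNReal.inv_pow, ← pow_mul, ← ENNReal.rpow_mul_natCast]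
    rw [mul_left_comm, ← ENNReal.rpow_natCast q, ← ENNReal.rpow_neg, ← ENNReal.rpow_add _ _ hq0 hqt]
    congr 2
    push_cast; ring
  simp only [hterm]
  rw [ENNReal.tsum_mul_left, ENNReal.tsum_geometric]
  refine ENNReal.mul_lt_top (by simp) ?_
  rw [ENNReal.inv_lt_top, tsub_pos_iff_lt]
  exact ENNReal.rpow_lt_one_of_one_lt_of_neg hq (by linarith)

/-- At the critical exponent every layer `r < T` contributes `O(1)`, whence the linear growth in
`T`; beyond `T` the series is geometric. -/
lemma tsum_layers_truncated_le {q : ℝ≥0∞} (hq : 1 < q) {β : ℝ} {κ : ℕ}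
    (hβ : β ≤ κ) (N T : ℕ) (hT : 1 ≤ T) :
    ∑' r : ℕ, (q ^ r) ^ β * (N * (((q ^ r)⁻¹) ^ κ * (q ^ (r - T))⁻¹))
      ≤ N * (1 + (1 - q⁻¹)⁻¹) * T := by
  have hterm : ∀ r : ℕ, (q ^ r) ^ β * (N * (((q ^ r)⁻¹) ^ κ * (q ^ (r - T))⁻¹))
      ≤ N * (q⁻¹) ^ (r - T) := by
    intro r
    have h1 : (q ^ r) ^ β * ((q ^ r)⁻¹) ^ κ ≤ 1 := by
      rw [← ENNReal.inv_pow, ← div_eq_mul_inv, ← ENNReal.rpow_natCast (q ^ r) κ]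
      refine ENNReal.div_le_of_le_mul ?_
      rw [one_mul]
      exact ENNReal.rpow_le_rpow_of_exponent_le (one_le_pow₀ hq.le) hβ
    calc _ = ((q ^ r) ^ β * ((q ^ r)⁻¹) ^ κ) * (N * (q⁻¹) ^ (r - T)) := by
          rw [ENNReal.inv_pow (n := r - T)]; ring
      _ ≤ 1 * _ := by gcongr
      _ = _ := one_mul _
  refine (ENNReal.tsum_le_tsum hterm).trans ?_
  rw [ENNReal.tsum_mul_left, mul_assoc,
    ← Summable.sum_add_tsum_nat_add' (k := T) ENNReal.summable]
  gcongr
  simp only [Nat.add_sub_cancel]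
  rw [ENNReal.tsum_geometric, add_mul, one_mul]
  have hT' : (1 : ℝ≥0∞) ≤ T := by exact_mod_cast hT
  gcongr ?_ + ?_
  · calc _ ≤ ∑ r ∈ Finset.range T, (1 : ℝ≥0∞) := by
          refine Finset.sum_le_sum fun r hr => ?_
          rw [Nat.sub_eq_zero_of_le (Finset.mem_range.1 hr).le, pow_zero]
      _ = T := by simp
  · exact le_mul_of_one_le_right' hT'

end Layers

/-! ### Recursion over the columns -/

section Recursion

variable {F : Type*} [Field F] [Fintype F] {m n i j : ℕ}

/-- The norm of the wedge product of the top parts (the first `m` rows) of the first `j` columns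
of `s`, as a maximum of minors. Repeated rows are allowed in `f`; they give a zero minor. -/
noncomputable def topNorm (hj : j ≤ i) (s : Matrix (Fin (m + n)) (Fin i) (LaurentSeries F)) :
    ℝ≥0∞ :=
  ⨆ f : Fin j → Fin m, aE (dt (Fin.castAdd n ∘ f) (Fin.castLE hj) s)

lemma measurable_topNorm (hj : j ≤ i) :
    Measurable (topNorm (F := F) (m := m) (n := n) hj) :=
  Measurable.iSup fun _ => measurable_dt _ _

lemma topNorm_ne_top (hj : j ≤ i) (s : Matrix (Fin (m + n)) (Fin i) (LaurentSeries F)) :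
    topNorm hj s ≠ ⊤ := by
  rcases isEmpty_or_nonempty (Fin j → Fin m) with h | h
  · simp [topNorm]
  · obtain ⟨f, hf⟩ := exists_eq_ciSup_of_finite
      (f := fun f : Fin j → Fin m => aE (dt (Fin.castAdd n ∘ f) (Fin.castLE hj) s))
    rw [topNorm, ← hf]
    exact aE_ne_top _

lemma snoc_castLE (hj : j < i) :
    (Fin.snoc (Fin.castLE hj.le) ⟨j, hj⟩ : Fin (j + 1) → Fin i) = Fin.castLE hj := by
  ext a
  refine Fin.lastCases ?_ (fun a => ?_) a <;> simp

/-- One step of the recursion over the columns. Here `Z` is a quantity such that `Z ≤ q^{-r} W`,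
where `W` is the top norm of the first `j` columns, forces the minors extending a maximal minor of
`W` by column `j` and a row `k ∈ S r f` to be at most `q^{-e r k} W`. -/
lemma lintegral_step {ν : Measure (Matrix (Fin (m + n)) (Fin i) (LaurentSeries F))}
    (hν : ∀ k l, EntryInvariant ν k l) (hm : 1 ≤ m) (hj : j < i) {β : ℝ} (hβ : 0 < β)
    {Z : Matrix (Fin (m + n)) (Fin i) (LaurentSeries F) → ℝ≥0∞} (hZm : Measurable Z)
    (S : ℕ → (Fin j → Fin m) → Finset (Fin (m + n)))
    (hS : ∀ r f, ∀ k ∈ S r f, ∀ a, (Fin.castAdd n ∘ f) a ≠ k)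
    (e : ℕ → Fin (m + n) → ℕ) (P : ℕ → ℝ≥0∞)
    (hP : ∀ r f, ∏ k ∈ S r f, (Q F ^ e r k)⁻¹ ≤ P r)
    (hZ : ∀ r s f, ∀ k ∈ S r f, Z s ≤ (Q F ^ r)⁻¹ * topNorm hj.le s →
      aE (dt (Fin.snoc (Fin.castAdd n ∘ f) k : Fin (j + 1) → Fin (m + n))
        (Fin.snoc (Fin.castLE hj.le) ⟨j, hj⟩ : Fin (j + 1) → Fin i) s)
        ≤ (Q F ^ e r k)⁻¹ * topNorm hj.le s) :
    ∫⁻ s, Z s ^ (-β) ∂ν ≤ (∫⁻ s, topNorm hj.le s ^ (-β) ∂ν) *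
      (1 + Q F ^ β * ∑' r : ℕ, (Q F ^ r) ^ β *
        (Fintype.card (Fin j → Fin m) * P r)) := by
  have : Nonempty (Fin j → Fin m) := ⟨fun _ => ⟨0, hm⟩⟩
  set W := topNorm (F := F) (m := m) (n := n) hj.le with hWdef
  have hWm : Measurable W := measurable_topNorm _
  have hφm : Measurable fun s => W s ^ (-β) := hWm.pow_const _
  have hc : ∀ a, (Fin.castLE hj.le) a ≠ (⟨j, hj⟩ : Fin i) := by
    intro a h
    have := congrArg Fin.val h
    simp only [Fin.val_castLE] at this
    omega
  have hWinv : ∀ k x s, W (Matrix.single k ⟨j, hj⟩ x + s) = W s := by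
    intro k x s
    simp only [hWdef, topNorm, dt_single_add_of_notMem _ _ hc]
  -- Weighting by `W^{-β}`, which does not involve column `j`, preserves the invariance.
  set ρ := ν.withDensity fun s => W s ^ (-β) with hρdef
  have hρ : ∀ k, EntryInvariant ρ k ⟨j, hj⟩ := fun k =>
    (hν k _).withDensity hφm fun x s => by rw [hWinv]
  have hρtot : ρ Set.univ = ∫⁻ s, W s ^ (-β) ∂ν := by
    rw [hρdef, withDensity_apply _ MeasurableSet.univ, Measure.restrict_univ]
  let A : ℕ → Set (Matrix (Fin (m + n)) (Fin i) (LaurentSeries F)) := fun r =>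
    {s | W s ≠ 0 ∧ Z s ≤ (Q F ^ r)⁻¹ * W s}
  have hAm : ∀ r, MeasurableSet (A r) := fun r =>
    (measurableSet_eq_fun hWm measurable_const).compl.inter
      (measurableSet_le hZm (measurable_const.mul hWm))
  have hA : ∀ r, ρ (A r) ≤ Fintype.card (Fin j → Fin m) * P r * ρ Set.univ := by
    intro r
    let B : (Fin j → Fin m) → Set (Matrix (Fin (m + n)) (Fin i) (LaurentSeries F)) := fun f =>
      {s | dt (Fin.castAdd n ∘ f) (Fin.castLE hj.le) s ≠ 0 ∧ ∀ k ∈ S r f,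
        aE (dt (Fin.snoc (Fin.castAdd n ∘ f) k : Fin (j + 1) → Fin (m + n))
          (Fin.snoc (Fin.castLE hj.le) ⟨j, hj⟩ : Fin (j + 1) → Fin i) s)
          ≤ (Q F ^ e r k)⁻¹ * aE (dt (Fin.castAdd n ∘ f) (Fin.castLE hj.le) s)}
    have hAB : A r ⊆ ⋃ f, B f := by
      rintro s ⟨h1, h2⟩
      obtain ⟨f, hf⟩ := exists_eq_ciSup_of_finite
        (f := fun f : Fin j → Fin m => aE (dt (Fin.castAdd n ∘ f) (Fin.castLE hj.le) s))
      have hf : aE (dt (Fin.castAdd n ∘ f) (Fin.castLE hj.le) s) = W s := hf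
      refine Set.mem_iUnion.2 ⟨f, ?_, fun k hk => ?_⟩
      · rw [← hf] at h1
        exact fun h => h1 (aE_eq_zero.2 h)
      · rw [hf]
        exact hZ r s f k hk h2
    have hB : ∀ f, ρ (B f) ≤ P r * ρ Set.univ := fun f =>
      (measure_column_le hρ (measurable_dt _ _) (fun k => measurable_dt _ _)
        (fun k x s => dt_single_add_of_notMem _ _ hc k x s) (S r f)
        (fun k hk k' x s => dt_snoc_single_add _ _ hc (hS r f k hk) k' x s) (e r)).trans
        (by gcongr; exact hP r f)
    calc ρ (A r) ≤ ∑ f, ρ (B f) := (measure_mono hAB).trans (measure_iUnion_fintype_le _ _)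
      _ ≤ ∑ f : Fin j → Fin m, P r * ρ Set.univ := Finset.sum_le_sum fun f _ => hB f
      _ = _ := by simp [mul_assoc]
  have hGm : ∀ r, Measurable fun s : Matrix (Fin (m + n)) (Fin i) (LaurentSeries F) =>
      (Q F ^ r) ^ β * (A r).indicator
        (1 : Matrix (Fin (m + n)) (Fin i) (LaurentSeries F) → ℝ≥0∞) s := fun r =>
    measurable_const.mul (measurable_one.indicator (hAm r))
  have hGm' : Measurable fun s : Matrix (Fin (m + n)) (Fin i) (LaurentSeries F) =>
      ∑' r, (Q F ^ r) ^ β * (A r).indicator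
        (1 : Matrix (Fin (m + n)) (Fin i) (LaurentSeries F) → ℝ≥0∞) s :=
    Measurable.tsum hGm
  calc ∫⁻ s, Z s ^ (-β) ∂ν
      ≤ ∫⁻ s, W s ^ (-β) * (1 + Q F ^ β * ∑' r : ℕ, (Q F ^ r) ^ β *
          (A r).indicator 1 s) ∂ν := by
        refine lintegral_mono fun s => ?_
        refine (rpow_neg_le_layers (one_lt_Q (F := F)) Q_ne_top
          (topNorm_ne_top hj.le s) hβ).trans_eq ?_
        simp only [Set.indicator]
        rfl
    _ = ∫⁻ s, (1 + Q F ^ β * ∑' r : ℕ, (Q F ^ r) ^ β * (A r).indicator 1 s) ∂ρ := by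
        rw [hρdef]
        exact (lintegral_withDensity_eq_lintegral_mul ν hφm
          (g := fun s => 1 + Q F ^ β * ∑' r : ℕ, (Q F ^ r) ^ β * (A r).indicator 1 s)
          (measurable_const.add (measurable_const.mul hGm'))).symm
    _ = ρ Set.univ + Q F ^ β * ∑' r : ℕ, (Q F ^ r) ^ β * ρ (A r) := by
        rw [lintegral_add_left measurable_const, lintegral_const_mul _ hGm',
          lintegral_tsum fun r => (hGm r).aemeasurable]
        congr 1
        · simp
        · congr 2
          ext r
          rw [lintegral_const_mul _ (measurable_one.indicator (hAm r)),
            lintegral_indicator_one (hAm r)]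
    _ ≤ ρ Set.univ + Q F ^ β * ∑' r : ℕ, (Q F ^ r) ^ β *
          (Fintype.card (Fin j → Fin m) * P r * ρ Set.univ) := by
        gcongr with r
        exact hA r
    _ = _ := by
        rw [← hρtot, mul_add, mul_one]
        congr 1
        simp_rw [← mul_assoc]
        rw [ENNReal.tsum_mul_right]
        ring

/-- The rows among the first `m` not used by `f`. -/
noncomputable def freeRows (n : ℕ) (f : Fin j → Fin m) : Finset (Fin (m + n)) :=
  ((Finset.univ \ Finset.univ.image f).map (Fin.castAddEmb n))

lemma mem_freeRows {f : Fin j → Fin m} {k : Fin (m + n)} (hk : k ∈ freeRows n f) :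
    ∃ a : Fin m, k = Fin.castAdd n a ∧ ∀ b, f b ≠ a := by
  simp only [freeRows, Finset.mem_map, Finset.mem_sdiff, Finset.mem_univ, true_and,
    Finset.mem_image, not_exists] at hk
  obtain ⟨a, ha, rfl⟩ := hk
  exact ⟨a, rfl, ha⟩

lemma le_card_freeRows (f : Fin j → Fin m) : m - j ≤ (freeRows n f).card := by
  rw [freeRows, Finset.card_map, Finset.card_sdiff_of_subset (Finset.subset_univ _)]
  have : (Finset.univ.image f).card ≤ j := by
    simpa using Finset.card_image_le (s := Finset.univ) (f := f)
  simp only [Finset.card_univ, Fintype.card_fin]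
  omega

lemma prod_freeRows_le (f : Fin j → Fin m) (r : ℕ) :
    ((Q F ^ r)⁻¹) ^ (freeRows n f).card ≤ ((Q F ^ r)⁻¹) ^ (m - j) :=
  pow_le_pow_right_of_le_one' (ENNReal.inv_le_one.2 (one_le_pow₀ one_lt_Q.le)) (le_card_freeRows f)

lemma dt_le_topNorm (hj : j < i) (f : Fin j → Fin m) (a : Fin m)
    (s : Matrix (Fin (m + n)) (Fin i) (LaurentSeries F)) :
    aE (dt (Fin.snoc (Fin.castAdd n ∘ f) (Fin.castAdd n a) : Fin (j + 1) → Fin (m + n))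
      (Fin.snoc (Fin.castLE hj.le) ⟨j, hj⟩ : Fin (j + 1) → Fin i) s)
      ≤ topNorm (j := j + 1) hj s := by
  rw [snoc_castLE, ← Fin.comp_snoc]
  exact le_iSup (fun f : Fin (j + 1) → Fin m =>
    aE (dt (Fin.castAdd n ∘ f) (Fin.castLE hj) s)) _

/-- Away from the last column the exponent is subcritical and negative moments stay finite. -/
lemma lintegral_topNorm_lt_top
    {ν : Measure (Matrix (Fin (m + n)) (Fin i) (LaurentSeries F))}
    (hν : ∀ k l, EntryInvariant ν k l) (hν1 : ν Set.univ < ⊤) (hm : 1 ≤ m) {β : ℝ} (hβ : 0 < β)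
    (hcrit : ∀ j : ℕ, j + 1 < i → β < (m - j : ℕ)) (hj : j < i) :
    ∫⁻ s, topNorm (F := F) (m := m) (n := n) hj.le s ^ (-β) ∂ν < ⊤ := by
  induction j with
  | zero =>
    have : ∀ s, topNorm (F := F) (m := m) (n := n) hj.le s = 1 := by
      intro s
      simp [topNorm, dt, aE_one]
    simpa [this] using hν1
  | succ j ih =>
    have hj' : j < i := by omega
    refine (lintegral_step hν hm hj' hβ (measurable_topNorm _) (fun _ f => freeRows n f) ?_
      (fun r _ => r) (fun r => ((Q F ^ r)⁻¹) ^ (m - j)) ?_ ?_).trans_lt ?_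
    · rintro r f k hk a h
      obtain ⟨b, rfl, hb⟩ := mem_freeRows hk
      exact hb a (Fin.castAdd_injective _ _ h)
    · intro r f
      rw [Finset.prod_const]
      exact prod_freeRows_le f r
    · intro r s f k hk h
      obtain ⟨b, rfl, hb⟩ := mem_freeRows hk
      exact (dt_le_topNorm hj' f b s).trans h
    · refine ENNReal.mul_lt_top (ih hj') (ENNReal.add_lt_top.2 ⟨by simp, ?_⟩)
      refine ENNReal.mul_lt_top (ENNReal.rpow_lt_top_of_nonneg hβ.le Q_ne_top) ?_
      exact tsum_layers_lt_top one_lt_Q Q_ne_top (hcrit j hj) _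

/-- The maximum of the minors on the first `j + 1` columns using either only top rows or `j` top rows
and the row `b`, which is meant to be a bottom row. The factor `q^{-T}` is the relative weight which `g_t` gives to a bottom row. -/
noncomputable def cutNorm (b : Fin (m + n)) (hj : j < i) (T : ℕ)
    (s : Matrix (Fin (m + n)) (Fin i) (LaurentSeries F)) : ℝ≥0∞ :=
  max (topNorm (j := j + 1) hj s) (⨆ f : Fin j → Fin m, (Q F ^ T)⁻¹ *
    aE (dt (Fin.snoc (Fin.castAdd n ∘ f) b : Fin (j + 1) → Fin (m + n))
      (Fin.snoc (Fin.castLE hj.le) ⟨j, hj⟩ : Fin (j + 1) → Fin i) s))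

lemma measurable_cutNorm (b : Fin (m + n)) (hj : j < i) (T : ℕ) :
    Measurable (cutNorm (F := F) (m := m) (n := n) b hj T) :=
  (measurable_topNorm _).max (Measurable.iSup fun _ => measurable_const.mul (measurable_dt _ _))

/-- In the last column the exponent may be critical; the bottom row cuts off the logarithmic
divergence at scale `q^{-T}`. -/
lemma lintegral_cutNorm_le
    {ν : Measure (Matrix (Fin (m + n)) (Fin i) (LaurentSeries F))}
    (hν : ∀ k l, EntryInvariant ν k l) (hm : 1 ≤ m) {β : ℝ} (hβ : 0 < β)
    (hj : j < i) (hcrit : β ≤ (m - j : ℕ)) {b : Fin (m + n)} (hb : m ≤ b) {T : ℕ} (hT : 1 ≤ T) :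
    ∫⁻ s, cutNorm (F := F) b hj T s ^ (-β) ∂ν ≤
      (∫⁻ s, topNorm (F := F) (m := m) (n := n) hj.le s ^ (-β) ∂ν) *
        (1 + Q F ^ β * (Fintype.card (Fin j → Fin m) * (1 + (1 - (Q F)⁻¹)⁻¹))) * T := by
  have hbtop : ∀ a : Fin m, Fin.castAdd n a ≠ b := by
    rintro a rfl
    simp only [Fin.val_castAdd] at hb
    omega
  have hbfree : ∀ f : Fin j → Fin m, b ∉ freeRows n f := by
    intro f h
    obtain ⟨a, ha, -⟩ := mem_freeRows h
    exact hbtop a ha.symm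
  have hT' : (1 : ℝ≥0∞) ≤ T := by exact_mod_cast hT
  refine (lintegral_step hν hm hj hβ (measurable_cutNorm b hj T)
    (fun r f => if T ≤ r then insert b (freeRows n f) else freeRows n f) ?_
    (fun r k => if k = b then r - T else r)
    (fun r => ((Q F ^ r)⁻¹) ^ (m - j) * (Q F ^ (r - T))⁻¹) ?_ ?_).trans ?_
  · intro r f k hk a h
    have hk' : k = b ∨ k ∈ freeRows n f := by
      split_ifs at hk
      · exact Finset.mem_insert.1 hk
      · exact Or.inr hk
    rcases hk' with rfl | hk'
    · exact hbtop _ h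
    · obtain ⟨c, rfl, hc⟩ := mem_freeRows hk'
      exact hc a (Fin.castAdd_injective _ _ h)
  · intro r f
    have hfree : ∏ k ∈ freeRows n f, (Q F ^ (if k = b then r - T else r))⁻¹
        ≤ ((Q F ^ r)⁻¹) ^ (m - j) := by
      refine le_trans (le_of_eq ?_) (prod_freeRows_le (n := n) f r)
      rw [← Finset.prod_const]
      refine Finset.prod_congr rfl fun k hk => ?_
      rw [if_neg (by rintro rfl; exact hbfree f hk)]
    split_ifs with h
    · rw [Finset.prod_insert (hbfree f), if_pos rfl, mul_comm]
      gcongr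
    · rw [Nat.sub_eq_zero_of_le (by omega)]
      simpa [Nat.sub_eq_zero_of_le (show r ≤ T by omega)] using hfree
  · intro r s f k hk h
    by_cases hkb : k = b
    · subst hkb
      have hTr : T ≤ r := by
        by_contra hlt
        rw [if_neg hlt] at hk
        exact hbfree f hk
      rw [if_pos rfl]
      have h1 : (Q F ^ T)⁻¹ * aE (dt (Fin.snoc (Fin.castAdd n ∘ f) k : Fin (j + 1) → Fin (m + n))
          (Fin.snoc (Fin.castLE hj.le) ⟨j, hj⟩ : Fin (j + 1) → Fin i) s)
          ≤ (Q F ^ r)⁻¹ * topNorm hj.le s :=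
        ((le_iSup (fun f : Fin j → Fin m => (Q F ^ T)⁻¹ *
          aE (dt (Fin.snoc (Fin.castAdd n ∘ f) k : Fin (j + 1) → Fin (m + n))
          (Fin.snoc (Fin.castLE hj.le) ⟨j, hj⟩ : Fin (j + 1) → Fin i) s)) f).trans
          (le_max_right _ _)).trans h
      obtain ⟨u, rfl⟩ := Nat.exists_eq_add_of_le hTr
      have hT0 : (Q F ^ T)⁻¹ ≠ 0 := by simp [Q_ne_top]
      have hTt : (Q F ^ T)⁻¹ ≠ ⊤ := by simp [Q_ne_zero]
      rw [_root_.pow_add, ENNReal.mul_inv (Or.inr (by simp [Q_ne_top])) (Or.inr (by simp [Q_ne_zero])),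
        mul_assoc, ENNReal.mul_le_mul_iff_right hT0 hTt] at h1
      simpa using h1
    · have hk' : k ∈ freeRows n f := by
        split_ifs at hk
        · exact (Finset.mem_insert.1 hk).resolve_left hkb
        · exact hk
      rw [if_neg hkb]
      obtain ⟨c, rfl, hc⟩ := mem_freeRows hk'
      exact ((dt_le_topNorm hj f c s).trans (le_max_left _ _)).trans h
  · rw [mul_assoc]
    gcongr
    have := tsum_layers_truncated_le (one_lt_Q (F := F)) hcrit
      (Fintype.card (Fin j → Fin m)) T hT
    calc _ ≤ 1 + Q F ^ β * ((Fintype.card (Fin j → Fin m) : ℝ≥0∞) *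
          (1 + (1 - (Q F)⁻¹)⁻¹) * T) := by gcongr
      _ ≤ T + Q F ^ β * ((Fintype.card (Fin j → Fin m) : ℝ≥0∞) *
          (1 + (1 - (Q F)⁻¹)⁻¹) * T) := by gcongr
      _ = _ := by ring

end Recursion

/-! ### The diagonal flow -/

section Flow

variable {F : Type*} [Field F] {m n i j : ℕ}

lemma dt_gMat_mul (t : ℤ) (f : Fin j → Fin (m + n)) (c : Fin j → Fin i)
    (s : Matrix (Fin (m + n)) (Fin i) (LaurentSeries F)) :
    dt f c (gMat F m n t * s) = (∏ a, (Fin.append (fun _ : Fin m => Xu F ^ (-(n * t)))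
      (fun _ : Fin n => Xu F ^ ((m : ℤ) * t)) (f a))) * dt f c s := by
  have hg : gMat F m n t = Matrix.diagonal (Fin.append (fun _ : Fin m => Xu F ^ (-(n * t)))
      (fun _ : Fin n => Xu F ^ ((m : ℤ) * t))) := by
    refine Matrix.ext fun a b => ?_
    refine Fin.addCases (fun a => ?_) (fun a => ?_) a <;>
    refine Fin.addCases (fun b => ?_) (fun b => ?_) b <;>
    simp [gMat, Matrix.diagonal_apply, Matrix.one_apply, Fin.ext_iff]
    all_goals omega
  rw [hg, dt, dt, ← Matrix.det_mul_column]
  congr 1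
  refine Matrix.ext fun a b => ?_
  simp [Matrix.diagonal_mul]

variable [Fintype F]

/-- `‖g_t (s₁ ∧ ⋯ ∧ s_i)‖` is at least `q^{nti}` times the maximum of the minors with at most one
bottom row, a bottom row carrying the weight `q^{-(m+n)t}`. -/
lemma cutNorm_le_wedgeNorm (hn : 1 ≤ n) (t : ℕ)
    (s : Matrix (Fin (m + n)) (Fin (j + 1)) (LaurentSeries F)) :
    (Q F ^ (n * t)) ^ (j + 1) * cutNorm (Fin.natAdd m ⟨0, hn⟩) (Nat.lt_succ_self j)
      ((m + n) * t) s ≤ ENNReal.ofReal (wedgeNorm F (gMat F m n t * s)) := by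
  have hid : (Fin.castLE (Nat.lt_succ_self j) : Fin (j + 1) → Fin (j + 1)) = id := by
    ext a; simp
  have htop : aE (Xu F ^ (-((n : ℤ) * (t : ℤ)))) = Q F ^ (n * t) := by
    rw [aE_Xu_zpow, neg_neg, ← Nat.cast_mul, zpow_natCast]
  have hbot : aE (Xu F ^ ((m : ℤ) * (t : ℤ))) = (Q F ^ (m * t))⁻¹ := by
    rw [aE_Xu_zpow, ← Nat.cast_mul, ENNReal.zpow_neg, zpow_natCast]
  rw [cutNorm, mul_max, topNorm, ENNReal.mul_iSup, ENNReal.mul_iSup, hid]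
  refine max_le (iSup_le fun f => ?_) (iSup_le fun f => ?_)
  · refine le_trans (le_of_eq ?_) (aE_dt_le_wedgeNorm (Fin.castAdd n ∘ f) _)
    rw [dt_gMat_mul, aE_mul]
    simp only [Function.comp_apply, Fin.append_left, Finset.prod_const, Finset.card_univ,
      Fintype.card_fin, aE_pow, htop]
  · refine le_trans (le_of_eq ?_) (aE_dt_le_wedgeNorm
      (Fin.snoc (Fin.castAdd n ∘ f) (Fin.natAdd m ⟨0, hn⟩) : Fin (j + 1) → Fin (m + n)) _)
    rw [snoc_castLE, hid, dt_gMat_mul, aE_mul, Fin.prod_univ_castSucc]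
    simp only [Fin.snoc_castSucc, Fin.snoc_last, Function.comp_apply, Fin.append_left,
      Fin.append_right, Finset.prod_const, Finset.card_univ, Fintype.card_fin, aE_mul, aE_pow,
      htop, hbot]
    rw [← mul_assoc]
    congr 1
    have h0 : Q F ^ (n * t) ≠ 0 := pow_ne_zero _ Q_ne_zero
    have h1 : Q F ^ (n * t) ≠ ⊤ := ENNReal.pow_ne_top Q_ne_top
    rw [add_mul, _root_.pow_add (Q F), ENNReal.mul_inv (Or.inr h1) (Or.inr h0), pow_succ, mul_assoc]
    congr 1
    rw [mul_left_comm, ENNReal.mul_inv_cancel h0 h1, mul_one]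

/-- The estimate for one value `i = j + 1`, for any finite measure invariant under integral
translations of the entries. -/
lemma lintegral_wedgeNorm_le
    {ν : Measure (Matrix (Fin (m + n)) (Fin (j + 1)) (LaurentSeries F))}
    (hν : ∀ k l, EntryInvariant ν k l) (hν1 : ν Set.univ < ⊤) (hn : 1 ≤ n) (hj : j + 1 ≤ m) :
    ∃ C : ℝ≥0∞, C ≠ ⊤ ∧ ∀ t : ℕ, 1 ≤ t →
      ∫⁻ s, (ENNReal.ofReal (wedgeNorm F (gMat F m n t * s))) ^ (-((m : ℝ) / (j + 1 : ℕ))) ∂ν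
        ≤ C * t * (Q F ^ (m * n * t))⁻¹ := by
  have hm : 1 ≤ m := by omega
  have hj0 : (0 : ℝ) < (j + 1 : ℕ) := by positivity
  set β : ℝ := (m : ℝ) / (j + 1 : ℕ) with hβdef
  have hβ : 0 < β := div_pos (by exact_mod_cast hm) hj0
  have hcrit' : β ≤ (m - j : ℕ) := by
    rw [hβdef, div_le_iff₀ hj0]
    obtain ⟨u, rfl⟩ := Nat.exists_eq_add_of_le hj
    rw [show j + 1 + u - j = u + 1 by omega]
    push_cast
    nlinarith [mul_nonneg (Nat.cast_nonneg (α := ℝ) u) (Nat.cast_nonneg (α := ℝ) j)]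
  have hcrit : ∀ j' : ℕ, j' + 1 < j + 1 → β < (m - j' : ℕ) := by
    intro j' hj'
    refine hcrit'.trans_lt ?_
    exact_mod_cast (by omega : m - j < m - j')
  have hfin := lintegral_topNorm_lt_top hν hν1 hm hβ hcrit (Nat.lt_succ_self j)
  set I := ∫⁻ s, topNorm (F := F) (m := m) (n := n) (Nat.lt_succ_self j).le s ^ (-β) ∂ν
  set C₀ := I * (1 + Q F ^ β * (Fintype.card (Fin j → Fin m) * (1 + (1 - (Q F)⁻¹)⁻¹))) with hC₀
  have hC₀t : C₀ ≠ ⊤ := by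
    refine (ENNReal.mul_lt_top hfin (ENNReal.add_lt_top.2 ⟨by simp, ?_⟩)).ne
    refine ENNReal.mul_lt_top (ENNReal.rpow_lt_top_of_nonneg hβ.le Q_ne_top) ?_
    refine ENNReal.mul_lt_top (by simp) (ENNReal.add_lt_top.2 ⟨by simp, ?_⟩)
    rw [ENNReal.inv_lt_top, tsub_pos_iff_lt]
    exact ENNReal.inv_lt_one.2 one_lt_Q
  refine ⟨C₀ * (m + n : ℕ), ENNReal.mul_ne_top hC₀t (by simp), fun t ht => ?_⟩
  have hcut := lintegral_cutNorm_le hν hm hβ (Nat.lt_succ_self j) hcrit'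
    (b := Fin.natAdd m ⟨0, hn⟩) (by simp) (T := (m + n) * t) (by nlinarith)
  -- The weight `q^{nti}` contributes `q^{-nti · m/i} = q^{-mnt}`.
  have hweight : ((Q F ^ (n * t)) ^ (j + 1)) ^ (-β) = (Q F ^ (m * n * t))⁻¹ := by
    rw [ENNReal.rpow_neg, ← ENNReal.rpow_natCast_mul, hβdef, mul_div_cancel₀ _ hj0.ne',
      ENNReal.rpow_natCast, ← pow_mul]
    congr 2
    ring
  have h0 : (Q F ^ (n * t)) ^ (j + 1) ≠ 0 := pow_ne_zero _ (pow_ne_zero _ Q_ne_zero)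
  have h1 : (Q F ^ (n * t)) ^ (j + 1) ≠ ⊤ := ENNReal.pow_ne_top (ENNReal.pow_ne_top Q_ne_top)
  have hpt : ∀ s, (ENNReal.ofReal (wedgeNorm F (gMat F m n t * s))) ^ (-β)
      ≤ (Q F ^ (m * n * t))⁻¹ * cutNorm (Fin.natAdd m ⟨0, hn⟩) (Nat.lt_succ_self j)
        ((m + n) * t) s ^ (-β) := by
    intro s
    refine (rpow_neg_anti hβ.le (cutNorm_le_wedgeNorm hn t s)).trans_eq ?_
    rw [ENNReal.rpow_neg, ENNReal.mul_rpow_of_nonneg _ _ hβ.le, ENNReal.mul_inv, ← hweight,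
      ENNReal.rpow_neg, ENNReal.rpow_neg]
    · exact Or.inl (by simp [ENNReal.rpow_eq_zero_iff, h0, h1])
    · exact Or.inl (ENNReal.rpow_lt_top_of_nonneg hβ.le h1).ne
  calc _ ≤ ∫⁻ s, (Q F ^ (m * n * t))⁻¹ * cutNorm (Fin.natAdd m ⟨0, hn⟩) (Nat.lt_succ_self j)
        ((m + n) * t) s ^ (-β) ∂ν := lintegral_mono hpt
    _ = (Q F ^ (m * n * t))⁻¹ * ∫⁻ s, cutNorm (Fin.natAdd m ⟨0, hn⟩) (Nat.lt_succ_self j)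
        ((m + n) * t) s ^ (-β) ∂ν := lintegral_const_mul _ ((measurable_cutNorm _ _ _).pow_const _)
    _ ≤ (Q F ^ (m * n * t))⁻¹ * (C₀ * ((m + n) * t : ℕ)) := by gcongr
    _ = _ := by push_cast; ring

end Flow

end WedgeEstimate

/-- **The diagonal-flow wedge estimate (Eq. (3.12)).** There is `c > 0` depending only on
`m, n` such that for every `i ∈ {1, …, m}` and every integer `t ≥ 1`,
`∫_{M_{m+n,i}(𝒪)} ‖g_t (s₁ ∧ ⋯ ∧ s_i)‖^{-m/i} dμ_{(m+n)i}(s) ≤ c t q^{-mnt}`, where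
`s₁, …, s_i` are the columns of `s` and `μ_{(m+n)i}` is the additive Haar measure
normalized so that `μ_{(m+n)i}(M_{m+n,i}(𝒪)) = 1`. -/
theorem stmt13 (F : Type*) [Field F] [Fintype F] (m n : ℕ) (hm : 1 ≤ m) (hn : 1 ≤ n)
    (μ : ∀ i : ℕ, MeasureTheory.Measure (Matrix (Fin (m + n)) (Fin i) (LaurentSeries F)))
    (hinv : ∀ i : ℕ, ∀ a : Matrix (Fin (m + n)) (Fin i) (LaurentSeries F),
      (μ i).map (fun s => a + s) = μ i)
    (hnorm : ∀ i : ℕ, μ i (intMat F (m + n) i) = 1) :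
    ∃ c : ℝ, 0 < c ∧ ∀ i : ℕ, 1 ≤ i → i ≤ m → ∀ t : ℤ, 1 ≤ t →
      (∫⁻ s in intMat F (m + n) i,
          (ENNReal.ofReal (wedgeNorm F (gMat F m n t * s))) ^ (-((m : ℝ) / i)) ∂(μ i))
        ≤ ENNReal.ofReal (c * (t : ℝ) * (Fintype.card F : ℝ) ^ (-(m * n * t : ℤ))) := by
  classical
  have hone : ∀ i : ℕ, ∃ C : ℝ≥0∞, C ≠ ⊤ ∧ (1 ≤ i → i ≤ m → ∀ t : ℕ, 1 ≤ t →
      (∫⁻ s in intMat F (m + n) i,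
        (ENNReal.ofReal (wedgeNorm F (gMat F m n t * s))) ^ (-((m : ℝ) / i)) ∂(μ i))
        ≤ C * t * (WedgeEstimate.Q F ^ (m * n * t))⁻¹) := by
    intro i
    by_cases h : 1 ≤ i ∧ i ≤ m
    · obtain ⟨j, rfl⟩ := Nat.exists_eq_add_of_le' h.1
      obtain ⟨C, hC, hb⟩ := WedgeEstimate.lintegral_wedgeNorm_le
        (ν := (μ (j + 1)).restrict (intMat F (m + n) (j + 1)))
        (WedgeEstimate.entryInvariant_restrict_intMat (hinv _) WedgeEstimate.measurableSet_intMat)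
        (by simp [hnorm]) hn h.2
      exact ⟨C, hC, fun _ _ => hb⟩
    · exact ⟨0, by simp, fun h1 h2 => absurd ⟨h1, h2⟩ h⟩
  choose C hC hb using hone
  have hsum : 0 ≤ ∑ i ∈ Finset.range (m + 1), (C i).toReal :=
    Finset.sum_nonneg fun _ _ => ENNReal.toReal_nonneg
  refine ⟨(∑ i ∈ Finset.range (m + 1), (C i).toReal) + 1, by linarith, fun i hi him t ht => ?_⟩
  obtain ⟨t, rfl⟩ := Int.eq_ofNat_of_zero_le (zero_le_one.trans ht)
  refine (hb i hi him t (by exact_mod_cast ht)).trans ?_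
  have hCi : C i ≤ ENNReal.ofReal ((∑ i ∈ Finset.range (m + 1), (C i).toReal) + 1) := by
    rw [← ENNReal.ofReal_toReal (hC i)]
    refine ENNReal.ofReal_le_ofReal ?_
    have := Finset.single_le_sum (f := fun i => (C i).toReal)
      (fun _ _ => ENNReal.toReal_nonneg) (Finset.mem_range.2 (Nat.lt_succ_of_le him))
    linarith
  have hpow : ENNReal.ofReal ((Fintype.card F : ℝ) ^ (-(m * n * (t : ℤ) : ℤ)))
      = (WedgeEstimate.Q F ^ (m * n * t))⁻¹ := by
    rw [WedgeEstimate.ofReal_card_zpow, ENNReal.zpow_neg]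
    norm_cast
  rw [ENNReal.ofReal_mul (by positivity), ENNReal.ofReal_mul (by positivity), hpow]
  gcongr
  simp
end
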